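/- Let m ≥ 1 be an integer and 1 ≤ B < ∞ a real number. Let E_m(B) = { x ∈ (0,1) irrational : a_n(x)·a_{n+1}(x)⋯a_{n+m−1}(x) ≥ B^n for infinitely many n ∈ ℕ }. Then dim_H E_m(B) = t_B^{(m)}, where t_B^{(m)} = inf{ s ∈ [0,1] : limsup_{n→∞} (1/n)·log Σ_{(a_1,…,a_n) ∈ (ℕ≥1)^n} B^{−n·f_m(s)}·q_n(a_1,…,a_n)^{−2s} ≤ 0 } (the limsup taken in the extended reals), and f_m is given by the iterative formula f_1(s) = s and f_{k+1}(s) = s·f_k(s)/(1 − s + f_k(s)) for k ≥ 1. -/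

import Mathlib

open Filter MeasureTheory Set

/-- The Gauss map `T(x) = 1/x - ⌊1/x⌋`. -/
noncomputable def gaussMap (x : ℝ) : ℝ := 1 / x - (⌊1 / x⌋ : ℤ)

/-- The `n`-th partial quotient `a_n(x)` (for `n ≥ 1`) of the continued
fraction expansion of `x`: `a_n(x) = ⌊1 / T^{n-1}(x)⌋`. -/
noncomputable def pq (x : ℝ) (n : ℕ) : ℕ := ⌊1 / (gaussMap^[n - 1] x)⌋₊

/-- The continuant `q_n(a_1, …, a_n)`: `q_0 = 1`, `q_1 = a_1`,
`q_k = a_k q_{k-1} + q_{k-2}`. -/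
def contQ : (n : ℕ) → (Fin n → ℕ) → ℕ
  | 0, _ => 1
  | 1, a => a 0
  | (n + 2), a =>
      a (Fin.last (n + 1)) * contQ (n + 1) (Fin.init a) +
        contQ n (Fin.init (Fin.init a))

/-- `s_B`: the Wang–Wu pressure exponent. -/
noncomputable def sExp (B : ℝ) : ℝ :=
  sInf {s : ℝ | 0 ≤ s ∧
    Filter.atTop.limsup (fun n : ℕ =>
      (((n : ℝ)⁻¹ : ℝ) : EReal) * ENNReal.log (∑' a : Fin n → ℕ+,
        ENNReal.ofReal ((B ^ n * ((contQ n fun i => (a i : ℕ)) : ℝ) ^ 2) ^ (-s)))) ≤ 0}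

/-- `g_{B₁,B₂}`: the two-parameter pressure exponent. -/
noncomputable def gExp (B₁ B₂ : ℝ) : ℝ :=
  sInf {s : ℝ | 0 ≤ s ∧
    Filter.atTop.limsup (fun n : ℕ =>
      (((n : ℝ)⁻¹ : ℝ) : EReal) * ENNReal.log (∑' a : Fin n → ℕ+,
        ENNReal.ofReal (B₂ ^ ((1 - s) * (n : ℝ)) *
          (B₁ ^ n * ((contQ n fun i => (a i : ℕ)) : ℝ) ^ 2) ^ (-s)))) ≤ 0}

/-- The iterates `f_1(s) = s`, `f_{k+1}(s) = s f_k(s) / (1 - s + f_k(s))`;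
here `fIter s k = f_{k+1}(s)`, so `f_m(s) = fIter s (m - 1)`. -/
noncomputable def fIter (s : ℝ) : ℕ → ℝ
  | 0 => s
  | (k + 1) => s * fIter s k / (1 - s + fIter s k)

/-- `t_B^{(m)}`: the Huang–Wu–Xu pressure exponent. -/
noncomputable def tExpM (B : ℝ) (m : ℕ) : ℝ :=
  sInf {s : ℝ | 0 ≤ s ∧ s ≤ 1 ∧
    Filter.atTop.limsup (fun n : ℕ =>
      (((n : ℝ)⁻¹ : ℝ) : EReal) * ENNReal.log (∑' a : Fin n → ℕ+,
        ENNReal.ofReal (B ^ (-(n : ℝ) * fIter s (m - 1)) *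
          ((contQ n fun i => (a i : ℕ)) : ℝ) ^ (-(2 * s))))) ≤ 0}



lemma pq_succ (x : ℝ) (n : ℕ) : pq x (n + 1) = ⌊1 / (gaussMap^[n] x)⌋₊ := by
  simp [pq]

lemma gauss_inv {x : ℝ} (h0 : 0 < x) : x⁻¹ = (⌊1 / x⌋₊ : ℝ) + gaussMap x := by
  have h : (0:ℝ) ≤ 1 / x := by positivity
  have := natCast_floor_eq_intCast_floor (R := ℝ) h
  rw [gaussMap, this]; simp

lemma gauss_mem_Ico (x : ℝ) : gaussMap x ∈ Ico (0:ℝ) 1 := by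
  unfold gaussMap
  exact ⟨Int.fract_nonneg _, Int.fract_lt_one _⟩

lemma gauss_irr {x : ℝ} (hx : Irrational x) : Irrational (gaussMap x) := by
  unfold gaussMap
  rw [one_div]
  exact (irrational_inv_iff.2 hx).sub_intCast _

lemma iter_irr {x : ℝ} (hx : Irrational x) (n : ℕ) : Irrational (gaussMap^[n] x) := by
  induction n with
  | zero => simpa
  | succ n ih => rw [Function.iterate_succ_apply']; exact gauss_irr ih

lemma iter_mem {x : ℝ} (hx : x ∈ Ioo (0:ℝ) 1) (hi : Irrational x) (n : ℕ) :
    gaussMap^[n] x ∈ Ioo (0:ℝ) 1 := by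
  cases n with
  | zero => simpa
  | succ n =>
    rw [Function.iterate_succ_apply']
    have h := gauss_mem_Ico (gaussMap^[n] x)
    refine ⟨lt_of_le_of_ne h.1 ?_, h.2⟩
    intro h0
    exact (gauss_irr (iter_irr hi n)).ne_zero h0.symm

lemma pq_pos {x : ℝ} (n : ℕ) (hx : gaussMap^[n] x ∈ Ioo (0:ℝ) 1) : 1 ≤ pq x (n + 1) := by
  rw [pq_succ]
  apply Nat.le_floor
  rw [Nat.cast_one, one_div]
  exact (one_le_inv₀ hx.1).2 hx.2.le

lemma iter_inv {x : ℝ} {n : ℕ} (h0 : 0 < gaussMap^[n] x) :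
    (gaussMap^[n] x)⁻¹ = (pq x (n + 1) : ℝ) + gaussMap^[n + 1] x := by
  rw [pq_succ, gauss_inv h0, Function.iterate_succ_apply']

/-- product of inverses along the orbit -/
noncomputable def orbP (x : ℝ) (n : ℕ) : ℝ := ∏ i ∈ Finset.range n, (gaussMap^[i] x)⁻¹

lemma orbP_pos {x : ℝ} {n : ℕ} (h : ∀ i < n, 0 < gaussMap^[i] x) : 0 < orbP x n := by
  unfold orbP
  exact Finset.prod_pos fun i hi => inv_pos.2 (h i (Finset.mem_range.1 hi))

lemma orbP_add (x : ℝ) (n k : ℕ) : orbP x (n + k) = orbP x n * orbP (gaussMap^[n] x) k := by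
  unfold orbP
  rw [Finset.prod_range_add]
  congr 1
  refine Finset.prod_congr rfl fun i _ => ?_
  rw [← Function.iterate_add_apply, add_comm n i]

/-- digits of x as continuants -/
noncomputable def qOf (x : ℝ) (n : ℕ) : ℕ := contQ n (fun i => pq x (i + 1))

lemma qOf_rec (x : ℝ) (n : ℕ) : qOf x (n + 2) = pq x (n + 2) * qOf x (n + 1) + qOf x n := by
  unfold qOf
  rw [contQ]
  rfl

lemma orbP_eq (x : ℝ) (n : ℕ) (h : ∀ i < n + 1, 0 < gaussMap^[i] x) :
    orbP x (n + 1) = qOf x (n + 1) + qOf x n * gaussMap^[n + 1] x := by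
  induction n with
  | zero =>
    have := iter_inv (h 0 (by norm_num))
    simp [orbP, qOf, contQ] at this ⊢
    linarith
  | succ n ih =>
    have h1 := ih fun i hi => h i (by omega)
    have h2 := h (n + 1) (by omega)
    have h3 := iter_inv h2
    rw [orbP, Finset.prod_range_succ, ← orbP, h1, qOf_rec]
    push_cast
    have h4 : gaussMap^[n+1] x * ((pq x (n + 1 + 1) : ℝ) + gaussMap^[n + 1 + 1] x) = 1 := by
      rw [← h3]; exact mul_inv_cancel₀ h2.ne'
    rw [h3]
    linear_combination (qOf x n : ℝ) * h4

lemma orb_dist (x y : ℝ) (n : ℕ) (hx : ∀ i < n, 0 < gaussMap^[i] x)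
    (hy : ∀ i < n, 0 < gaussMap^[i] y) (hxy : ∀ i < n, pq x (i + 1) = pq y (i + 1)) :
    |gaussMap^[n] x - gaussMap^[n] y| = |x - y| * (orbP x n * orbP y n) := by
  induction n with
  | zero => simp [orbP]
  | succ n ih =>
    have h1 := ih (fun i hi => hx i (by omega)) (fun i hi => hy i (by omega))
      (fun i hi => hxy i (by omega))
    have h2 := iter_inv (hx n (by omega))
    have h3 := iter_inv (hy n (by omega))
    have px := hx n (by omega)
    have py := hy n (by omega)
    rw [hxy n (by omega)] at h2
    have e1 : orbP x (n+1) = orbP x n * (gaussMap^[n] x)⁻¹ := by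
      rw [orbP, Finset.prod_range_succ, ← orbP]
    have e2 : orbP y (n+1) = orbP y n * (gaussMap^[n] y)⁻¹ := by
      rw [orbP, Finset.prod_range_succ, ← orbP]
    have e3 : gaussMap^[n+1] x - gaussMap^[n+1] y
        = -(gaussMap^[n] x - gaussMap^[n] y) * ((gaussMap^[n] x)⁻¹ * (gaussMap^[n] y)⁻¹) := by
      have : gaussMap^[n+1] x - gaussMap^[n+1] y = (gaussMap^[n] x)⁻¹ - (gaussMap^[n] y)⁻¹ := by
        rw [h2, h3]; ring
      rw [this]; field_simp; ring
    rw [e3, e1, e2, abs_mul, abs_neg, h1, abs_of_pos (show 0 < (gaussMap^[n] x)⁻¹ * (gaussMap^[n] y)⁻¹ by positivity)]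
    ring

lemma qOf_le_orbP (x : ℝ) (n : ℕ) (h : ∀ i < n, 0 < gaussMap^[i] x) :
    (qOf x n : ℝ) ≤ orbP x n := by
  cases n with
  | zero => simp [qOf, orbP, contQ]
  | succ n =>
    rw [orbP_eq x n h]
    have : 0 ≤ gaussMap^[n+1] x := by
      rw [Function.iterate_succ_apply']; exact (gauss_mem_Ico _).1
    nlinarith [Nat.cast_nonneg (α := ℝ) (qOf x n)]

lemma contQ_pos : ∀ (n : ℕ) (a : Fin n → ℕ), (∀ i, 1 ≤ a i) → 1 ≤ contQ n a
  | 0, _, _ => by simp [contQ]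
  | 1, a, h => by simpa [contQ] using h 0
  | (n + 2), a, h => by
    rw [contQ]
    have h1 := contQ_pos (n + 1) (Fin.init a) (fun i => h _)
    have h2 := h (Fin.last (n + 1))
    have := Nat.mul_le_mul h2 h1
    omega

lemma contQ_init_le : ∀ (n : ℕ) (a : Fin (n + 1) → ℕ), (∀ i, 1 ≤ a i) →
    contQ n (Fin.init a) ≤ contQ (n + 1) a
  | 0, a, h => by simpa [contQ] using h 0
  | (n + 1), a, h => by
    conv_rhs => rw [contQ]
    have h2 := h (Fin.last (n + 1))
    have := Nat.mul_le_mul h2 (le_refl (contQ (n + 1) (Fin.init a)))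
    omega

/-- exponential growth: `2^n ≤ 2 q_n^2` -/
lemma contQ_growth : ∀ (n : ℕ) (a : Fin n → ℕ), (∀ i, 1 ≤ a i) → 2 ^ n ≤ 2 * (contQ n a) ^ 2
  | 0, _, _ => by simp [contQ]
  | 1, a, h => by
    have := h 0
    simp only [contQ]; nlinarith
  | (n + 2), a, h => by
    have h0 := contQ_growth n (Fin.init (Fin.init a)) (fun i => h _)
    have h1 := contQ_init_le n (Fin.init a) (fun i => h _)
    have h2 : 2 * contQ n (Fin.init (Fin.init a)) ≤ contQ (n + 2) a := by
      rw [contQ]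
      have := Nat.mul_le_mul (h (Fin.last (n + 1))) (le_refl (contQ (n + 1) (Fin.init a)))
      omega
    have := Nat.pow_le_pow_left h2 2
    rw [pow_add]; nlinarith

lemma qOf_le_succ (x : ℝ) (n : ℕ) (h : ∀ i < n + 1, gaussMap^[i] x ∈ Ioo (0:ℝ) 1) :
    qOf x n ≤ qOf x (n + 1) := by
  apply contQ_init_le n (fun i => pq x (i + 1))
  intro i
  exact pq_pos i (h i i.2)

lemma orbP_le_qOf (x : ℝ) (n : ℕ) (h : ∀ i < n, gaussMap^[i] x ∈ Ioo (0:ℝ) 1) :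
    orbP x n ≤ 2 * qOf x n := by
  cases n with
  | zero => simp [qOf, orbP, contQ]
  | succ n =>
    rw [orbP_eq x n fun i hi => (h i hi).1]
    have h1 : gaussMap^[n+1] x ≤ 1 := by
      rw [Function.iterate_succ_apply']; exact (gauss_mem_Ico _).2.le
    have h2 : (qOf x n : ℝ) ≤ qOf x (n + 1) := by exact_mod_cast qOf_le_succ x n h
    nlinarith [Nat.cast_nonneg (α := ℝ) (qOf x n)]


lemma press_lt {n : ℕ} (hn : 0 < n) (S : ENNReal) (δ : ℝ) :
    (((n : ℝ)⁻¹ : ℝ) : EReal) * ENNReal.log S < (δ : EReal) ↔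
      S < ENNReal.ofReal (Real.exp (δ * n)) := by
  have h1 : (δ : EReal) = ENNReal.log (ENNReal.ofReal (Real.exp δ)) := by
    rw [ENNReal.log_ofReal_of_pos (Real.exp_pos _), Real.log_exp]
  rw [← ENNReal.log_rpow, h1, ENNReal.log_lt_log_iff]
  have hn' : (0:ℝ) < n := by exact_mod_cast hn
  rw [ENNReal.rpow_inv_lt_iff hn', ENNReal.ofReal_rpow_of_pos (Real.exp_pos _), ← Real.exp_mul]

lemma hausdorff_zero_of_limsup {ι : Type*} [Countable ι] (J : ι → Set ℝ) (d : ℝ) (hd : 0 < d)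
    (E : Set ℝ) (hsum : ∑' i, Metric.ediam (J i) ^ d ≠ ⊤)
    (hE : ∀ x ∈ E, {i | x ∈ J i}.Infinite) : μH[d] E = 0 := by
  have ht := ENNReal.tendsto_tsum_compl_atTop_zero hsum
  set f : Finset ι → ENNReal := fun s => ∑' b : { x // x ∉ s }, Metric.ediam (J b) ^ d with hf
  have hr : Tendsto (fun s => (f s) ^ d⁻¹) atTop (nhds 0) := by
    have := (ENNReal.continuous_rpow_const (y := d⁻¹)).continuousAt.tendsto.comp ht
    simpa [ENNReal.zero_rpow_of_pos (inv_pos.2 hd), Function.comp_def] using this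
  have := Measure.hausdorffMeasure_le_liminf_tsum (ι := fun s : Finset ι => { x // x ∉ s }) d E
    (fun s => (f s) ^ d⁻¹) hr (fun s i => J i) (Eventually.of_forall fun s i => by
      rw [ENNReal.le_rpow_inv_iff hd]
      exact ENNReal.le_tsum (f := fun b : { x // x ∉ s } => Metric.ediam (J b) ^ d) i)
    (Eventually.of_forall fun s x hx => by
      obtain ⟨i, hi, hs⟩ := (hE x hx).exists_notMem_finset s
      exact mem_iUnion.2 ⟨⟨i, hs⟩, hi⟩)
  rw [ht.liminf_eq] at this
  exact le_antisymm this bot_le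

/-- exponents -/
noncomputable def cE (s F : ℝ) : ℕ → ℝ
  | 0 => 0
  | (j + 1) => ((1 - s) * cE s F j + F) / s

lemma fIter_pos {s : ℝ} (h0 : 0 < s) (h1 : s ≤ 1) (j : ℕ) : 0 < fIter s j := by
  induction j with
  | zero => simpa [fIter]
  | succ j ih =>
    rw [fIter]
    have : 0 < 1 - s + fIter s j := by linarith
    positivity

lemma cE_eq {s F : ℝ} (h0 : 0 < s) (h1 : s ≤ 1) (j : ℕ) : cE s F (j + 1) = F / fIter s j := by
  induction j with
  | zero => simp [cE, fIter]
  | succ j ih =>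
    rw [cE, ih, fIter]
    have h2 := fIter_pos h0 h1 j
    have : 0 < 1 - s + fIter s j := by linarith
    field_simp

lemma cE_m {s : ℝ} (h0 : 0 < s) (h1 : s ≤ 1) {m : ℕ} (hm : 1 ≤ m) :
    cE s (fIter s (m - 1)) m = 1 := by
  obtain ⟨k, rfl⟩ : ∃ k, m = k + 1 := ⟨m - 1, by omega⟩
  rw [cE_eq h0 h1]; simp [(fIter_pos h0 h1 k).ne']

lemma cE_nonneg {s F : ℝ} (h0 : 0 < s) (h1 : s ≤ 1) (hF : 0 ≤ F) (j : ℕ) : 0 ≤ cE s F j := by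
  induction j with
  | zero => simp [cE]
  | succ j ih =>
    rw [cE]
    have : 0 ≤ 1 - s := by linarith
    positivity

lemma cE_bd {s F : ℝ} (h0 : 0 < s) (h1 : s ≤ 1) (hF : 0 ≤ F) (j : ℕ) :
    (2 * s - 1) * cE s F j ≤ F := by
  induction j with
  | zero => simpa [cE]
  | succ j ih =>
    rw [cE, mul_div_assoc', div_le_iff₀ h0]
    nlinarith

lemma cE_mono {s F : ℝ} (h0 : 0 < s) (h1 : s ≤ 1) (hF : 0 ≤ F) (j : ℕ) :
    cE s F j ≤ cE s F (j + 1) := by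
  rw [cE, le_div_iff₀ h0]
  nlinarith [cE_bd h0 h1 hF j]

lemma cE_rel {s F : ℝ} (h0 : 0 < s) (j : ℕ) : (1 - s) * cE s F j - s * cE s F (j + 1) = -F := by
  rw [cE]; field_simp; ring

/-- tsum over finite tuples of positive integers -/
lemma tsum_fin_succ {α : Type*} (n : ℕ) (f : (Fin (n + 1) → α) → ENNReal) :
    ∑' a, f a = ∑' (a : Fin n → α), ∑' b : α, f (Fin.snoc a b) := by
  rw [← (Fin.snocEquiv (fun _ : Fin (n+1) => α)).tsum_eq, ENNReal.tsum_prod', ENNReal.tsum_comm]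
  rfl

lemma Z_finite (e : ℝ) (he : 1 < e) (k : ℕ) :
    ∑' b : Fin k → ℕ+, ENNReal.ofReal ((∏ i, ((b i : ℕ) : ℝ)) ^ (-e)) ≠ ⊤ := by
  induction k with
  | zero => simp
  | succ k ih =>
    rw [tsum_fin_succ]
    have h1 : ∑' b : ℕ+, ENNReal.ofReal (((b : ℕ) : ℝ) ^ (-e)) ≠ ⊤ := by
      have hs : Summable (fun b : ℕ+ => ((b : ℕ) : ℝ) ^ (-e)) := by
        have := (Real.summable_nat_rpow (p := -e)).2 (by linarith)
        exact this.comp_injective PNat.coe_injective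
      rw [← ENNReal.ofReal_tsum_of_nonneg (fun b => by positivity) hs]
      exact ENNReal.ofReal_ne_top
    have : ∀ (a : Fin k → ℕ+) (b : ℕ+),
        ENNReal.ofReal ((∏ i, (((Fin.snoc a b : Fin (k+1) → ℕ+) i : ℕ) : ℝ)) ^ (-e)) =
        ENNReal.ofReal ((∏ i, ((a i : ℕ) : ℝ)) ^ (-e)) * ENNReal.ofReal (((b : ℕ) : ℝ) ^ (-e)) := by
      intro a b
      rw [Fin.prod_univ_castSucc, ← ENNReal.ofReal_mul (by positivity)]
      simp only [Fin.snoc_castSucc, Fin.snoc_last]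
      rw [Real.mul_rpow (by positivity) (by positivity)]
    simp_rw [this, ENNReal.tsum_mul_left, ENNReal.tsum_mul_right]
    exact ENNReal.mul_ne_top ih h1

/-- the pressure sum -/
noncomputable def pS (B : ℝ) (F s : ℝ) (n : ℕ) : ENNReal :=
  ∑' a : Fin n → ℕ+, ENNReal.ofReal (B ^ (-(n : ℝ) * F) *
          ((contQ n fun i => (a i : ℕ)) : ℝ) ^ (-(2 * s)))

lemma contQ_snoc (n : ℕ) (a : Fin (n + 1) → ℕ+) (b : ℕ+) :
    contQ (n + 2) (fun i => ((Fin.snoc a b : Fin (n + 2) → ℕ+) i : ℕ)) =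
    b * contQ (n + 1) (fun i => (a i : ℕ)) + contQ n (Fin.init fun i => (a i : ℕ)) := by
  rw [contQ]
  have : (Fin.init fun i => ((Fin.snoc a b : Fin (n + 2) → ℕ+) i : ℕ)) = fun i => (a i : ℕ) := by
    funext i; simp [Fin.init]
  rw [this]; simp

lemma tele (x y : ℝ) (hx : 1 ≤ x) (hy : 0 ≤ y) :
    ∑' b : ℕ+, ENNReal.ofReal ((((b:ℕ):ℝ) * x + y)⁻¹ * ((((b:ℕ):ℝ) * x + y) + x)⁻¹)
      = ENNReal.ofReal (x⁻¹ * (x + y)⁻¹) := by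
  have h : HasSum (fun b : ℕ => ((((b+1:ℕ):ℝ) * x + y)⁻¹ * ((((b+1:ℕ):ℝ) * x + y) + x)⁻¹))
      (x⁻¹ * (x + y)⁻¹) := by
    rw [hasSum_iff_tendsto_nat_of_nonneg (fun b => by positivity)]
    have h1 : ∀ N : ℕ, ∑ b ∈ Finset.range N, ((((b+1:ℕ):ℝ) * x + y)⁻¹ * ((((b+1:ℕ):ℝ) * x + y) + x)⁻¹)
        = x⁻¹ * ((x + y)⁻¹ - (((N + 1 : ℕ) : ℝ) * x + y)⁻¹) := by
      intro N
      induction N with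
      | zero => simp
      | succ N ih =>
        rw [Finset.sum_range_succ, ih]
        have p1 : (0:ℝ) < ((N + 1 : ℕ):ℝ) * x + y := by positivity
        have p2 : (0:ℝ) < ((N + 1 + 1 : ℕ):ℝ) * x + y := by positivity
        have p3 : (0:ℝ) < ((N + 1 : ℕ):ℝ) * x + y + x := by positivity
        have e : ((N + 1 + 1 : ℕ):ℝ) * x + y = ((N + 1 : ℕ):ℝ) * x + y + x := by push_cast; ring
        have p4 : 0 < x + y := by positivity
        rw [e]; field_simp; ring
    simp_rw [h1]
    have h2 : Tendsto (fun N : ℕ => (((N + 1 : ℕ) : ℝ) * x + y)⁻¹) atTop (nhds 0) := by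
      apply Tendsto.inv_tendsto_atTop
      apply tendsto_atTop_add_const_right
      apply Tendsto.atTop_mul_const (by linarith)
      exact tendsto_natCast_atTop_atTop.comp (tendsto_add_atTop_nat 1)
    simpa using (tendsto_const_nhds.sub h2).const_mul x⁻¹
  have h' := h.tsum_eq
  rw [← Equiv.pnatEquivNat.symm.tsum_eq]
  have : ∀ b : ℕ, ((Equiv.pnatEquivNat.symm b : ℕ+) : ℕ) = b + 1 := fun b => by simp
  simp_rw [this]
  rw [← ENNReal.ofReal_tsum_of_nonneg (fun b => by positivity) h.summable, h']

lemma sum_one (n : ℕ) :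
    ∑' a : Fin (n + 1) → ℕ+, ENNReal.ofReal (((contQ (n + 1) fun i => (a i : ℕ)) : ℝ)⁻¹ *
      (((contQ (n + 1) fun i => (a i : ℕ)) : ℝ) + contQ n (Fin.init fun i => (a i : ℕ)))⁻¹) = 1 := by
  induction n with
  | zero =>
    rw [tsum_fin_succ]
    have := tele 1 0 (by norm_num) (by norm_num)
    simpa [contQ, Fin.snoc] using this
  | succ n ih =>
    rw [tsum_fin_succ, ← ih]
    refine tsum_congr fun a => ?_
    have h1 : (1:ℝ) ≤ contQ (n + 1) (fun i => (a i : ℕ)) := by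
      exact_mod_cast contQ_pos _ _ fun i => (a i).2
    rw [← tele _ _ h1 (Nat.cast_nonneg _)]
    refine tsum_congr fun b => ?_
    have e : (Fin.init fun i => ((Fin.snoc a b : Fin (n + 2) → ℕ+) i : ℕ)) = fun i => (a i : ℕ) := by
      funext i; simp [Fin.init]
    rw [contQ_snoc, e]
    push_cast
    rfl

lemma pS_one (B : ℝ) (hB : 1 ≤ B) (n : ℕ) : pS B 1 1 (n + 1) ≤ 2 := by
  have h := sum_one n
  calc pS B 1 1 (n + 1) ≤ ∑' a : Fin (n + 1) → ℕ+, 2 * ENNReal.ofReal (((contQ (n + 1) fun i => (a i : ℕ)) : ℝ)⁻¹ *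
      (((contQ (n + 1) fun i => (a i : ℕ)) : ℝ) + contQ n (Fin.init fun i => (a i : ℕ)))⁻¹) := by
        refine ENNReal.tsum_le_tsum fun a => ?_
        have h1 : (1:ℝ) ≤ contQ (n + 1) (fun i => (a i : ℕ)) := by
          exact_mod_cast contQ_pos _ _ fun i => (a i).2
        have h2 : (contQ n (Fin.init fun i => (a i : ℕ)) : ℝ) ≤ contQ (n + 1) (fun i => (a i : ℕ)) := by
          exact_mod_cast contQ_init_le _ _ fun i => (a i).2
        have e2 : (2 : ENNReal) = ENNReal.ofReal 2 := by simp
        rw [e2, ← ENNReal.ofReal_mul (by norm_num)]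
        apply ENNReal.ofReal_le_ofReal
        generalize (contQ (n + 1) (fun i => (a i : ℕ)) : ℝ) = q at *
        have h3 : (0:ℝ) ≤ contQ n (Fin.init fun i => (a i : ℕ)) := Nat.cast_nonneg _
        generalize (contQ n (Fin.init fun i => (a i : ℕ)) : ℝ) = r at *
        have hq : 0 < q := by linarith
        have e1 : q ^ (-(2 * 1 : ℝ)) = (q * q)⁻¹ := by
          rw [Real.rpow_neg hq.le]; norm_num; ring
        have e3 : B ^ (-((n + 1 : ℕ) : ℝ) * 1) ≤ 1 :=
          Real.rpow_le_one_of_one_le_of_nonpos hB (by push_cast; linarith [Nat.cast_nonneg (α := ℝ) n])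
        rw [e1]
        calc _ ≤ 1 * (q * q)⁻¹ := by gcongr
          _ ≤ 2 * (q⁻¹ * (q + r)⁻¹) := by
            have : 0 < q + r := by linarith
            field_simp
            linarith
    _ = 2 := by rw [ENNReal.tsum_mul_left, h, mul_one]

/-- pressure condition -/
def pressOK (B F s : ℝ) : Prop :=
  Filter.atTop.limsup (fun n : ℕ => (((n : ℝ)⁻¹ : ℝ) : EReal) * ENNReal.log (pS B F s n)) ≤ 0

lemma pressOK_ev {B F s : ℝ} (h : pressOK B F s) (δ : ℝ) (hδ : 0 < δ) :
    ∀ᶠ n : ℕ in atTop, pS B F s n < ENNReal.ofReal (Real.exp (δ * n)) := by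
  have h1 : Filter.atTop.limsup (fun n : ℕ => (((n : ℝ)⁻¹ : ℝ) : EReal) * ENNReal.log (pS B F s n)) < (δ : EReal) :=
    lt_of_le_of_lt h (by exact_mod_cast hδ)
  filter_upwards [eventually_lt_of_limsup_lt h1, eventually_gt_atTop 0] with n hn h0
  exact (press_lt h0 _ _).1 hn

lemma not_pressOK {B F s : ℝ} (h : ¬ pressOK B F s) :
    ∃ δ : ℝ, 0 < δ ∧ ∃ᶠ n : ℕ in atTop, ENNReal.ofReal (Real.exp (δ * n)) ≤ pS B F s n := by
  rw [pressOK, not_le] at h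
  obtain ⟨δ, h1, h2⟩ := EReal.lt_iff_exists_real_btwn.1 h
  refine ⟨δ, by exact_mod_cast h1, ?_⟩
  have := (frequently_lt_of_lt_limsup (by isBoundedDefault) h2).and_eventually (eventually_gt_atTop 0)
  refine this.mono fun n hn => ?_
  by_contra hc
  exact absurd hn.1 (not_lt.2 ((press_lt hn.2 _ _).2 (not_le.1 hc)).le)

lemma pressOK_one (B : ℝ) (hB : 1 ≤ B) : pressOK B 1 1 := by
  by_contra h
  obtain ⟨δ, hδ, hf⟩ := not_pressOK h
  have ht : Tendsto (fun n : ℕ => Real.exp (δ * n)) atTop atTop :=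
    Real.tendsto_exp_atTop.comp (Tendsto.const_mul_atTop hδ tendsto_natCast_atTop_atTop)
  obtain ⟨n, h1, h2, h3⟩ := (hf.and_eventually ((ht.eventually_gt_atTop 2).and (eventually_gt_atTop 0))).exists
  obtain ⟨k, rfl⟩ : ∃ k, n = k + 1 := ⟨n - 1, by omega⟩
  have := h1.trans (pS_one B hB k)
  have e2 : (2 : ENNReal) = ENNReal.ofReal 2 := by simp
  rw [e2, ENNReal.ofReal_le_ofReal_iff (by norm_num)] at this
  linarith

lemma fIter_one (j : ℕ) : fIter 1 j = 1 := by
  induction j with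
  | zero => rfl
  | succ j ih => rw [fIter, ih]; norm_num

lemma fIter_zero (j : ℕ) : fIter 0 j = 0 := by
  cases j with
  | zero => rfl
  | succ j => rw [fIter]; norm_num

lemma not_pressOK_zero (B : ℝ) : ¬ pressOK B 0 0 := by
  intro h
  obtain ⟨n, hn, h0⟩ := ((pressOK_ev h 1 one_pos).and (eventually_gt_atTop 0)).exists
  have : pS B 0 0 n = ⊤ := by
    unfold pS
    obtain ⟨k, rfl⟩ : ∃ k, n = k + 1 := ⟨n - 1, by omega⟩
    simp
  rw [this] at hn
  exact not_top_lt hn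


/-- the set E_m(B) -/
def ESet (m : ℕ) (B : ℝ) : Set ℝ := {x : ℝ | x ∈ Set.Ioo (0 : ℝ) 1 ∧ Irrational x ∧
      {n : ℕ | B ^ n ≤ ∏ i ∈ Finset.range m, (pq x (n + i) : ℝ)}.Infinite}

/-- covering sets -/
def covJ (B s F : ℝ) (n1 n k : ℕ) (a : Fin n → ℕ+) (b : Fin k → ℕ+) : Set ℝ :=
  {x : ℝ | n1 ≤ n ∧ x ∈ Ioo (0:ℝ) 1 ∧ Irrational x ∧ (∀ i : Fin n, pq x (i + 1) = a i) ∧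
    (∀ i : Fin k, pq x (n + i + 1) = b i) ∧
    (∏ i, ((b i : ℕ) : ℝ)) ≤ B ^ (cE s F k * (n + 1)) ∧
    B ^ (cE s F (k + 1) * (n + 1)) ≤ (∏ i, ((b i : ℕ) : ℝ)) * pq x (n + k + 1)}

lemma covJ_orbP {B s F : ℝ} {n1 n k : ℕ} {a : Fin n → ℕ+} {b : Fin k → ℕ+} {x : ℝ}
    (hx : x ∈ covJ B s F n1 n k a b) :
    (contQ n (fun i => (a i : ℕ)) : ℝ) * (∏ i, ((b i : ℕ) : ℝ)) ≤ orbP x (n + k) := by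
  obtain ⟨-, h1, h2, h3, h4, h5, h6⟩ := hx
  have hp : ∀ i, 0 < gaussMap^[i] x := fun i => (iter_mem h1 h2 i).1
  rw [orbP_add]
  have e1 : contQ n (fun i => (a i : ℕ)) = qOf x n := by
    unfold qOf; congr 1; funext i; exact (h3 i).symm
  have h7 := qOf_le_orbP x n (fun i _ => hp i)
  rw [e1]
  gcongr
  · exact (orbP_pos fun i _ => hp i).le
  · unfold orbP
    rw [Finset.prod_range]
    apply Finset.prod_le_prod
    · intro i _; positivity
    · intro i _
      rw [← Function.iterate_add_apply, add_comm (i : ℕ) n, iter_inv (hp _), ← h4 i]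
      linarith [hp (n + i + 1)]

lemma covJ_diam {B s F : ℝ} (hB : 1 ≤ B) {n1 n k : ℕ} {a : Fin n → ℕ+} {b : Fin k → ℕ+} {x y : ℝ}
    (hx : x ∈ covJ B s F n1 n k a b) (hy : y ∈ covJ B s F n1 n k a b) :
    |x - y| ≤ (B ^ (cE s F (k + 1) * (n + 1)) * (contQ n (fun i => (a i : ℕ)) : ℝ) ^ 2 *
      (∏ i, ((b i : ℕ) : ℝ)))⁻¹ := by
  have ox := covJ_orbP hx
  have oy := covJ_orbP hy
  obtain ⟨-, h1, h2, h3, h4, h5, h6⟩ := hx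
  obtain ⟨-, g1, g2, g3, g4, g5, g6⟩ := hy
  have hp : ∀ i, 0 < gaussMap^[i] x := fun i => (iter_mem h1 h2 i).1
  have gp : ∀ i, 0 < gaussMap^[i] y := fun i => (iter_mem g1 g2 i).1
  have hd := orb_dist x y (n + k) (fun i _ => hp i) (fun i _ => gp i) (by
    intro i hi
    by_cases h : i < n
    · exact (h3 ⟨i, h⟩).trans (g3 ⟨i, h⟩).symm
    · obtain ⟨j, rfl⟩ : ∃ j, i = n + j := ⟨i - n, by omega⟩
      exact (h4 ⟨j, by omega⟩).trans (g4 ⟨j, by omega⟩).symm)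
  have hq : (1:ℝ) ≤ contQ n (fun i => (a i : ℕ)) := by
    exact_mod_cast contQ_pos _ _ fun i => (a i).2
  have hb : 0 < (∏ i, ((b i : ℕ) : ℝ)) := Finset.prod_pos fun i _ => by exact_mod_cast (b i).2
  set q := (contQ n (fun i => (a i : ℕ)) : ℝ)
  set P := (∏ i, ((b i : ℕ) : ℝ))
  have hβ : 0 < B ^ (cE s F (k + 1) * (n + 1)) := Real.rpow_pos_of_pos (by linarith) _
  set β := B ^ (cE s F (k + 1) * (n + 1))
  have key : ∀ w : ℝ, 0 < gaussMap^[n+k] w → 0 < gaussMap^[n+k+1] w → β ≤ P * pq w (n + k + 1) →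
      gaussMap^[n+k] w ≤ P / β := by
    intro w hw hw1 hw2
    have h7 := iter_inv hw
    rw [le_div_iff₀ hβ]
    have h8 : gaussMap^[n+k] w * ((pq w (n+k+1) : ℝ) + gaussMap^[n+k+1] w) = 1 := by
      rw [← h7]; exact mul_inv_cancel₀ hw.ne'
    have h9 : gaussMap^[n+k] w * (pq w (n+k+1) : ℝ) ≤ 1 := by nlinarith
    calc _ ≤ gaussMap^[n+k] w * (P * pq w (n + k + 1)) := by gcongr
      _ = P * (gaussMap^[n+k] w * pq w (n + k + 1)) := by ring
      _ ≤ P * 1 := by gcongr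
      _ = P := by ring
  have kx := key x (hp _) (hp _) h6
  have ky := key y (gp _) (gp _) g6
  have hT : |gaussMap^[n+k] x - gaussMap^[n+k] y| ≤ P / β := by
    rw [abs_le]; constructor <;> linarith [hp (n+k), gp (n+k)]
  rw [hd] at hT
  have hqP : 0 < q * P := by positivity
  have h10 : |x - y| * ((q * P) * (q * P)) ≤ P / β := by
    refine le_trans ?_ hT
    gcongr
    linarith
  rw [← le_div_iff₀ (by positivity)] at h10
  refine h10.trans (le_of_eq ?_)
  field_simp

lemma covJ_ediam {B s σ F : ℝ} (hB : 1 ≤ B) (hs : 0 < s) (hs1 : s < 1) (hsσ : s ≤ σ)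
    (hF : 0 ≤ F) (n1 n k : ℕ)
    (a : Fin n → ℕ+) (b : Fin k → ℕ+) :
    Metric.ediam (covJ B s F n1 n k a b) ^ σ ≤ (if n1 ≤ n then
      ENNReal.ofReal (B ^ (-(n : ℝ) * F) * (contQ n (fun i => (a i : ℕ)) : ℝ) ^ (-(2 * σ))) else 0) *
      ENNReal.ofReal ((∏ i, ((b i : ℕ) : ℝ)) ^ (-(1 + (σ - s)))) := by
  have hσ : 0 < σ := by linarith
  rcases (covJ B s F n1 n k a b).eq_empty_or_nonempty with he | ⟨x, hx⟩
  · rw [he]; simp [ENNReal.zero_rpow_of_pos hσ]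
  have hn1 : n1 ≤ n := hx.1
  rw [if_pos hn1]
  have hb : 1 ≤ (∏ i, ((b i : ℕ) : ℝ)) := by
    have : 0 < ∏ i, (b i : ℕ) := Finset.prod_pos fun i _ => (b i).2
    exact_mod_cast this
  have hq : (1:ℝ) ≤ contQ n (fun i => (a i : ℕ)) := by
    exact_mod_cast contQ_pos _ _ fun i => (a i).2
  have hPB : (∏ i, ((b i : ℕ) : ℝ)) ≤ B ^ (cE s F k * (n + 1)) := hx.2.2.2.2.2.1
  have hdiam : Metric.ediam (covJ B s F n1 n k a b) ≤ ENNReal.ofReal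
      (B ^ (cE s F (k + 1) * (n + 1)) * (contQ n (fun i => (a i : ℕ)) : ℝ) ^ 2 *
      (∏ i, ((b i : ℕ) : ℝ)))⁻¹ := by
    apply Metric.ediam_le
    intro x hx y hy
    rw [edist_dist, Real.dist_eq]
    exact ENNReal.ofReal_le_ofReal (covJ_diam hB hx hy)
  refine (ENNReal.rpow_le_rpow hdiam hσ.le).trans ?_
  have hβ : 0 < B ^ (cE s F (k + 1) * (n + 1)) := Real.rpow_pos_of_pos (by linarith) _
  have hB0 : 0 < B := by linarith
  generalize (contQ n (fun i => (a i : ℕ)) : ℝ) = q at *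
  generalize (∏ i, ((b i : ℕ) : ℝ)) = P at *
  have hq0 : 0 < q := by linarith
  have hP0 : 0 < P := by linarith
  rw [ENNReal.ofReal_rpow_of_pos (by positivity), ← ENNReal.ofReal_mul (by positivity)]
  apply ENNReal.ofReal_le_ofReal
  rw [Real.inv_rpow (by positivity), ← Real.rpow_neg (by positivity),
    Real.mul_rpow (by positivity) hP0.le, Real.mul_rpow hβ.le (by positivity),
    ← Real.rpow_mul hB0.le, ← Real.rpow_natCast q 2, ← Real.rpow_mul hq0.le]
  have e1 : P ^ (-σ) = P ^ (1 - s) * P ^ (-(1 + (σ - s))) := by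
    rw [← Real.rpow_add hP0]; congr 1; ring
  have e2 : P ^ (1 - s) ≤ B ^ (cE s F k * (n + 1) * (1 - s)) := by
    rw [Real.rpow_mul hB0.le]
    exact Real.rpow_le_rpow hP0.le hPB (by linarith)
  have e3 : B ^ (cE s F (k+1) * (n + 1) * -σ) ≤ B ^ (cE s F (k+1) * (n + 1) * -s) := by
    apply Real.rpow_le_rpow_of_exponent_le hB
    have := mul_nonneg (cE_nonneg hs hs1.le hF (k+1)) (show (0:ℝ) ≤ n + 1 by positivity)
    nlinarith
  have e4 : B ^ (cE s F (k+1) * (n + 1) * -s) * B ^ (cE s F k * (n + 1) * (1 - s)) ≤ B ^ (-(n : ℝ) * F) := by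
    rw [← Real.rpow_add hB0]
    apply Real.rpow_le_rpow_of_exponent_le hB
    have := cE_rel (F := F) hs k
    have h2 : cE s F (k+1) * (n + 1) * -s + cE s F k * (n + 1) * (1 - s) = (n + 1) * (-F) := by
      rw [← this]; ring
    rw [h2]; nlinarith
  have e5 : q ^ (((2:ℕ):ℝ) * -σ) = q ^ (-(2 * σ)) := by congr 1; push_cast; ring
  rw [e5, e1]
  calc _ = (B ^ (cE s F (k+1) * (n + 1) * -σ) * P ^ (1 - s)) * q ^ (-(2 * σ)) * P ^ (-(1 + (σ - s))) := by ring
    _ ≤ (B ^ (cE s F (k+1) * (n + 1) * -s) * B ^ (cE s F k * (n + 1) * (1 - s))) * q ^ (-(2 * σ)) * P ^ (-(1 + (σ - s))) := by gcongr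
    _ ≤ _ := by gcongr

lemma pS_shift {B F s ε : ℝ} (hε : 0 < ε) (n : ℕ) (hB : 1 ≤ B) :
    pS B F (s + ε) n ≤ ENNReal.ofReal (2 ^ ε * ((2:ℝ) ^ (-ε)) ^ n) * pS B F s n := by
  unfold pS
  rw [← ENNReal.tsum_mul_left]
  refine ENNReal.tsum_le_tsum fun a => ?_
  rw [← ENNReal.ofReal_mul (by positivity)]
  apply ENNReal.ofReal_le_ofReal
  have hq : (1:ℝ) ≤ contQ n (fun i => (a i : ℕ)) := by
    exact_mod_cast contQ_pos _ _ fun i => (a i).2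
  have hg : (2:ℝ) ^ n ≤ 2 * (contQ n (fun i => (a i : ℕ)) : ℝ) ^ 2 := by
    exact_mod_cast contQ_growth n (fun i => (a i : ℕ)) fun i => (a i).2
  generalize (contQ n (fun i => (a i : ℕ)) : ℝ) = q at *
  have hq0 : 0 < q := by linarith
  have e1 : q ^ (-(2 * (s + ε))) = q ^ (-(2 * ε)) * q ^ (-(2 * s)) := by
    rw [← Real.rpow_add hq0]; congr 1; ring
  have e2 : q ^ (-(2 * ε)) = (q ^ 2) ^ (-ε) := by
    rw [← Real.rpow_natCast q 2, ← Real.rpow_mul hq0.le]; congr 1; push_cast; ring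
  have e3 : (q ^ 2) ^ (-ε) ≤ ((2:ℝ) ^ n / 2) ^ (-ε) := by
    apply Real.rpow_le_rpow_of_nonpos (by positivity) (by linarith) (by linarith)
  have e4 : ((2:ℝ) ^ n / 2) ^ (-ε) = 2 ^ ε * ((2:ℝ) ^ (-ε)) ^ n := by
    rw [Real.div_rpow (by positivity) (by positivity), Real.rpow_neg (by norm_num : (0:ℝ) ≤ 2) ε,
      div_inv_eq_mul, ← Real.rpow_natCast, ← Real.rpow_mul (by norm_num), ← Real.rpow_neg (by norm_num),
      ← Real.rpow_natCast, ← Real.rpow_mul (by norm_num)]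
    rw [mul_comm]; congr 2; ring
  rw [e1, e2]
  have : 0 ≤ B ^ (-(n:ℝ) * F) := Real.rpow_nonneg (by linarith) _
  calc _ ≤ B ^ (-(n:ℝ) * F) * ((2 ^ ε * ((2:ℝ) ^ (-ε)) ^ n) * q ^ (-(2 * s))) := by
        rw [← e4]; gcongr
    _ = _ := by ring

lemma ESet_cover {m : ℕ} (hm : 1 ≤ m) {B s : ℝ} (hB : 1 ≤ B) (hs : 0 < s) (hs1 : s < 1) (n1 : ℕ)
    {x : ℝ} (hx : x ∈ ESet m B) :
    {i : Σ n : ℕ, Σ k : Fin m, (Fin n → ℕ+) × (Fin k → ℕ+) |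
      x ∈ covJ B s (fIter s (m - 1)) n1 i.1 i.2.1 i.2.2.1 i.2.2.2}.Infinite := by
  obtain ⟨h1, h2, h3⟩ := hx
  set F := fIter s (m - 1) with hFdef
  have hmem := iter_mem h1 h2
  have key : ∀ n, n1 ≤ n → B ^ (n + 1) ≤ ∏ i ∈ Finset.range m, (pq x (n + 1 + i) : ℝ) →
      ∃ (k : Fin m) (a : Fin n → ℕ+) (b : Fin k → ℕ+), x ∈ covJ B s F n1 n k a b := by
    intro n hn hprod
    have hex : ∃ k : ℕ, B ^ (cE s F (k + 1) * (n + 1)) ≤ ∏ i ∈ Finset.range (k + 1), (pq x (n + 1 + i) : ℝ) := by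
      refine ⟨m - 1, ?_⟩
      have e : m - 1 + 1 = m := by omega
      rw [e, hFdef, cE_m hs hs1.le hm]
      refine le_trans (le_of_eq ?_) hprod
      rw [← Real.rpow_natCast]; push_cast; simp
    classical
    have hk := Nat.find_spec hex
    have hkm : Nat.find hex < m := by
      have : Nat.find hex ≤ m - 1 := by
        apply Nat.find_min'
        have e : m - 1 + 1 = m := by omega
        rw [e, hFdef, cE_m hs hs1.le hm]
        refine le_trans (le_of_eq ?_) hprod
        rw [← Real.rpow_natCast]; push_cast; simp
      omega
    have hkmin : ∀ j < Nat.find hex, _ := fun j hj => Nat.find_min hex hj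
    generalize Nat.find hex = k at hk hkm hkmin
    have ecast : ∀ b : Fin k → ℕ+, (∀ i, (b i : ℕ) = pq x (n + i + 1)) →
        (∏ i, ((b i : ℕ) : ℝ)) = ∏ i ∈ Finset.range k, (pq x (n + 1 + i) : ℝ) := by
      intro b hb
      rw [Finset.prod_range]
      refine Finset.prod_congr rfl fun i _ => ?_
      rw [hb i]; congr 2; ring
    obtain ⟨a, ha⟩ : ∃ a : Fin n → ℕ+, ∀ i, (a i : ℕ) = pq x (i + 1) :=
      ⟨fun i => ⟨pq x (i + 1), pq_pos _ (hmem _)⟩, fun i => rfl⟩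
    obtain ⟨b, hb⟩ : ∃ b : Fin k → ℕ+, ∀ i, (b i : ℕ) = pq x (n + i + 1) :=
      ⟨fun i => ⟨pq x (n + i + 1), pq_pos _ (hmem _)⟩, fun i => rfl⟩
    refine ⟨⟨k, hkm⟩, a, b, hn, h1, h2, fun i => (ha i).symm, fun i => (hb i).symm, ?_, ?_⟩
    · rw [ecast b hb]
      cases k with
      | zero => simp [cE]
      | succ j => exact (not_le.1 (hkmin j (by omega))).le
    · rw [ecast b hb]
      rw [Finset.prod_range_succ] at hk
      have e : n + 1 + k = n + k + 1 := by ring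
      rw [e] at hk
      exact hk
  have hinf : {n : ℕ | n1 ≤ n ∧ B ^ (n + 1) ≤ ∏ i ∈ Finset.range m, (pq x (n + 1 + i) : ℝ)}.Infinite := by
    rw [Set.infinite_iff_exists_gt] at h3 ⊢
    intro c
    obtain ⟨n, hn, hc⟩ := h3 (c + n1 + 1)
    obtain ⟨j, rfl⟩ : ∃ j, n = j + 1 := ⟨n - 1, by omega⟩
    exact ⟨j, ⟨by omega, hn⟩, by omega⟩
  refine Set.Infinite.of_image Sigma.fst (hinf.mono ?_)
  rintro n ⟨hn, hp⟩
  obtain ⟨k, a, b, h⟩ := key n hn hp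
  exact ⟨⟨n, k, a, b⟩, h, rfl⟩

lemma upper_aux {m : ℕ} (hm : 1 ≤ m) {B s σ : ℝ} (hB : 1 ≤ B) (hs : 0 < s) (hs1 : s < 1)
    (hsσ : s < σ) (hp : pressOK B (fIter s (m - 1)) s) :
    dimH (ESet m B) ≤ ENNReal.ofReal σ := by
  have hF : 0 < fIter s (m - 1) := fIter_pos hs hs1.le _
  set F := fIter s (m - 1) with hFd
  set ε := σ - s with hεd
  have hε : 0 < ε := by linarith
  have hl2 : 0 < Real.log 2 := Real.log_pos (by norm_num)
  obtain ⟨n1, hn1⟩ := eventually_atTop.1 (pressOK_ev hp (ε * Real.log 2 / 2) (by positivity))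
  have hzero : μH[σ] (ESet m B) = 0 := by
    apply hausdorff_zero_of_limsup (fun i : Σ n : ℕ, Σ k : Fin m, (Fin n → ℕ+) × (Fin k → ℕ+) =>
      covJ B s F n1 i.1 i.2.1 i.2.2.1 i.2.2.2) σ (by linarith) _ _
      (fun x hx => ESet_cover hm hB hs hs1 n1 hx)
    set Z : Fin m → ENNReal := fun k => ∑' b : Fin k → ℕ+, ENNReal.ofReal ((∏ i, ((b i : ℕ) : ℝ)) ^ (-(1 + ε))) with hZ
    set r : ℝ := Real.exp (-(ε * Real.log 2 / 2)) with hr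
    have hr0 : 0 < r := Real.exp_pos _
    have hr1 : r < 1 := by rw [hr, Real.exp_lt_one_iff]; have : 0 < ε * Real.log 2 / 2 := by positivity
                           linarith
    have hbound : ∀ n, (if n1 ≤ n then pS B F σ n else 0) ≤ ENNReal.ofReal (2 ^ ε) * ENNReal.ofReal r ^ n := by
      intro n
      split_ifs with h
      · have h1 := pS_shift (B := B) (F := F) (s := s) hε n hB
        have e : s + ε = σ := by rw [hεd]; ring
        rw [e] at h1
        refine h1.trans ?_
        refine (mul_le_mul_right (hn1 n h).le _).trans (le_of_eq ?_)
        rw [← ENNReal.ofReal_pow hr0.le, ← ENNReal.ofReal_mul (by positivity), ← ENNReal.ofReal_mul (by positivity)]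
        congr 1
        rw [mul_assoc]
        congr 1
        rw [Real.rpow_def_of_pos (by norm_num : (0:ℝ) < 2), hr, ← Real.exp_nat_mul, ← Real.exp_nat_mul, ← Real.exp_add]
        congr 1; ring
      · exact bot_le
    have hle : ∑' i : (Σ n : ℕ, Σ k : Fin m, (Fin n → ℕ+) × (Fin k → ℕ+)),
        Metric.ediam (covJ B s F n1 i.1 i.2.1 i.2.2.1 i.2.2.2) ^ σ ≤
        ∑' n : ℕ, (ENNReal.ofReal (2 ^ ε) * ENNReal.ofReal r ^ n) * ∑ k, Z k := by
      rw [ENNReal.tsum_sigma']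
      refine ENNReal.tsum_le_tsum fun n => ?_
      rw [ENNReal.tsum_sigma', tsum_fintype, Finset.mul_sum]
      refine Finset.sum_le_sum fun k _ => ?_
      rw [ENNReal.tsum_prod']
      refine le_trans ?_ (mul_le_mul_left (hbound n) _)
      have : (if n1 ≤ n then pS B F σ n else 0) = ∑' a : Fin n → ℕ+, (if n1 ≤ n then
        ENNReal.ofReal (B ^ (-(n : ℝ) * F) * (contQ n (fun i => (a i : ℕ)) : ℝ) ^ (-(2 * σ))) else 0) := by
        split_ifs
        · rfl
        · simp
      rw [this, ← ENNReal.tsum_mul_right]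
      refine ENNReal.tsum_le_tsum fun a => ?_
      rw [hZ, ← ENNReal.tsum_mul_left]
      refine ENNReal.tsum_le_tsum fun b => ?_
      exact covJ_ediam hB hs hs1 hsσ.le hF.le n1 n k a b
    refine ne_top_of_le_ne_top ?_ hle
    rw [ENNReal.tsum_mul_right, ENNReal.tsum_mul_left]
    refine ENNReal.mul_ne_top (ENNReal.mul_ne_top ENNReal.ofReal_ne_top ?_) ?_
    · rw [ENNReal.tsum_geometric]
      simp only [ne_eq, ENNReal.inv_eq_top]
      rw [tsub_eq_zero_iff_le, not_le]
      rw [ENNReal.ofReal_lt_one]; exact hr1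
    · rw [ENNReal.sum_ne_top]
      intro k _
      exact Z_finite _ (by linarith) _
  have hσ0 : 0 ≤ σ := by linarith
  have := dimH_le_of_hausdorffMeasure_ne_top (s := ESet m B) (d := σ.toNNReal) (by
    rw [Real.coe_toNNReal _ hσ0, hzero]; simp)
  exact this

lemma upper_bound {m : ℕ} (hm : 1 ≤ m) {B : ℝ} (hB : 1 ≤ B) :
    dimH (ESet m B) ≤ ENNReal.ofReal (tExpM B m) := by
  have hone : (1:ℝ) ∈ {s : ℝ | 0 ≤ s ∧ s ≤ 1 ∧ pressOK B (fIter s (m - 1)) s} := by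
    refine ⟨by norm_num, le_refl _, ?_⟩
    rw [fIter_one]; exact pressOK_one B hB
  have ht : tExpM B m = sInf {s : ℝ | 0 ≤ s ∧ s ≤ 1 ∧ pressOK B (fIter s (m - 1)) s} := rfl
  refine le_of_forall_gt_imp_ge_of_dense fun c hc => ?_
  by_cases h1 : 1 ≤ c
  · refine le_trans ?_ h1
    rw [← Real.dimH_univ]
    exact dimH_mono (subset_univ _)
  · have hcT : c ≠ ⊤ := by rintro rfl; simp at h1
    lift c to NNReal using hcT
    have hc' : tExpM B m < (c:ℝ) := by
      have := (ENNReal.ofReal_lt_iff_lt_toReal (by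
        rw [ht]; exact Real.sInf_nonneg fun s hs => hs.1) (by simp)).1 hc
      simpa using this
    have hc1 : (c:ℝ) < 1 := by
      have := not_le.1 h1
      exact_mod_cast this
    rw [ht] at hc'
    obtain ⟨s, hs, hsc⟩ := exists_lt_of_csInf_lt ⟨1, hone⟩ hc'
    have hs0 : s ≠ 0 := by
      rintro rfl
      have := hs.2.2
      rw [fIter_zero] at this
      exact not_pressOK_zero B this
    have := upper_aux hm hB (lt_of_le_of_ne hs.1 hs0.symm) (by linarith) hsc hs.2.2
    simpa using this


/-- finite continued fraction with tail `z` -/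
noncomputable def cfw (l : List ℕ) (z : ℝ) : ℝ := l.foldr (fun (a : ℕ) (y : ℝ) => 1 / ((a : ℝ) + y)) z

lemma cfw_nil (z : ℝ) : cfw [] z = z := rfl
lemma cfw_cons (a : ℕ) (l : List ℕ) (z : ℝ) : cfw (a :: l) z = 1 / ((a : ℝ) + cfw l z) := rfl
lemma cfw_append (l l' : List ℕ) (z : ℝ) : cfw (l ++ l') z = cfw l (cfw l' z) := by
  simp [cfw, List.foldr_append]

lemma cfw_mem_Icc {l : List ℕ} (hl : ∀ a ∈ l, 1 ≤ a) {z : ℝ} (hz : z ∈ Icc (0:ℝ) 1) :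
    cfw l z ∈ Icc (0:ℝ) 1 := by
  induction l with
  | nil => exact hz
  | cons a l ih =>
    have h := ih fun b hb => hl b (List.mem_cons_of_mem _ hb)
    have ha : (1:ℝ) ≤ a := by exact_mod_cast hl a List.mem_cons_self
    rw [cfw_cons]
    have : 1 ≤ (a:ℝ) + cfw l z := by linarith [h.1]
    exact ⟨by positivity, by rw [div_le_one (by linarith)]; exact this⟩

lemma cfw_mem_Ioo {l : List ℕ} (hl : ∀ a ∈ l, 1 ≤ a) {z : ℝ} (hz : z ∈ Ioo (0:ℝ) 1) :
    cfw l z ∈ Ioo (0:ℝ) 1 := by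
  induction l with
  | nil => exact hz
  | cons a l ih =>
    have h := ih fun b hb => hl b (List.mem_cons_of_mem _ hb)
    have ha : (1:ℝ) ≤ a := by exact_mod_cast hl a List.mem_cons_self
    rw [cfw_cons]
    have : 1 < (a:ℝ) + cfw l z := by linarith [h.1]
    exact ⟨by positivity, by rw [div_lt_one (by linarith)]; exact this⟩

lemma cfw_pos {l : List ℕ} (hl : ∀ a ∈ l, 1 ≤ a) {z : ℝ} (hz : 0 < z) : 0 < cfw l z := by
  induction l with
  | nil => exact hz
  | cons a l ih =>
    have h := ih fun b hb => hl b (List.mem_cons_of_mem _ hb)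
    rw [cfw_cons]; positivity

lemma cfw_cont {l : List ℕ} (hl : ∀ a ∈ l, 1 ≤ a) : ContinuousOn (cfw l) (Icc (0:ℝ) 1) := by
  induction l with
  | nil => exact continuousOn_id
  | cons a l ih =>
    have h := ih fun b hb => hl b (List.mem_cons_of_mem _ hb)
    have ha : (1:ℝ) ≤ a := by exact_mod_cast hl a List.mem_cons_self
    show ContinuousOn (fun z => 1 / ((a : ℝ) + cfw l z)) _
    refine ContinuousOn.div continuousOn_const (continuousOn_const.add h) fun z hz => ?_
    have := (cfw_mem_Icc (fun b hb => hl b (List.mem_cons_of_mem _ hb)) hz).1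
    linarith

lemma cfw_inj {l : List ℕ} : Function.Injective (cfw l) := by
  induction l with
  | nil => exact fun x y h => h
  | cons a l ih =>
    intro x y h
    rw [cfw_cons, cfw_cons, one_div, one_div, inv_inj] at h
    exact ih (by linarith)

/-- iterated composition -/
noncomputable def cfComp (w : ℕ → List ℕ) : ℕ → ℕ → ℝ → ℝ
  | _, 0, z => z
  | t, (n + 1), z => cfw (w t) (cfComp w (t + 1) n z)

lemma cfComp_succ' (w : ℕ → List ℕ) (t n : ℕ) (z : ℝ) :
    cfComp w t (n + 1) z = cfComp w t n (cfw (w (t + n)) z) := by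
  induction n generalizing t with
  | zero => rfl
  | succ n ih =>
    rw [cfComp, ih (t + 1)]
    conv_rhs => rw [cfComp]
    congr 3; ring_nf

lemma cf_exists (w : ℕ → List ℕ) (hw : ∀ t, w t ≠ []) (h1 : ∀ t, ∀ a ∈ w t, 1 ≤ a) :
    ∃ z : ℕ → ℝ, ∀ t, z t ∈ Ioo (0:ℝ) 1 ∧ z t = cfw (w t) (z (t + 1)) := by
  have hmem : ∀ n t z, z ∈ Icc (0:ℝ) 1 → cfComp w t n z ∈ Icc (0:ℝ) 1 := by
    intro n
    induction n with
    | zero => intro t z hz; exact hz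
    | succ n ih => intro t z hz; exact cfw_mem_Icc (h1 t) (ih _ _ hz)
  have hcont : ∀ n t, ContinuousOn (cfComp w t n) (Icc (0:ℝ) 1) := by
    intro n
    induction n with
    | zero => intro t; exact continuousOn_id
    | succ n ih => intro t; exact (cfw_cont (h1 t)).comp (ih (t + 1)) (fun z hz => hmem n _ z hz)
  set S : ℕ → Set ℝ := fun t => ⋂ n, cfComp w t n '' Icc (0:ℝ) 1 with hS
  have hne : (S 0).Nonempty := by
    apply IsCompact.nonempty_iInter_of_sequence_nonempty_isCompact_isClosed
    · rintro n _ ⟨z, hz, rfl⟩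
      exact ⟨cfw (w (0 + n)) z, cfw_mem_Icc (h1 _) hz, (cfComp_succ' w 0 n z).symm⟩
    · intro n; exact ⟨_, mem_image_of_mem _ (show (0:ℝ) ∈ Icc (0:ℝ) 1 by simp)⟩
    · exact isCompact_Icc.image_of_continuousOn (hcont 0 0)
    · intro n; exact (isCompact_Icc.image_of_continuousOn (hcont n 0)).isClosed
  have hstep : ∀ t x, x ∈ S t → ∃ y, y ∈ S (t + 1) ∧ x = cfw (w t) y := by
    intro t x hx
    rw [hS, mem_iInter] at hx
    obtain ⟨y, hy⟩ : ∃ y, x = cfw (w t) y := by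
      obtain ⟨z, hz, h⟩ := hx 1
      exact ⟨_, h.symm⟩
    refine ⟨y, ?_, hy⟩
    rw [hS, mem_iInter]
    intro n
    obtain ⟨z, hz, h⟩ := hx (n + 1)
    rw [cfComp, hy] at h
    exact ⟨z, hz, cfw_inj h⟩
  choose! f hf using hstep
  obtain ⟨x0, hx0⟩ := hne
  set z : ℕ → ℝ := fun t => Nat.rec x0 (fun t y => f t y) t with hz
  have hzS : ∀ t, z t ∈ S t := by
    intro t
    induction t with
    | zero => exact hx0
    | succ t ih => exact (hf t _ ih).1
  have hzI : ∀ t, z t ∈ Icc (0:ℝ) 1 := by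
    intro t
    obtain ⟨y, hy, h⟩ := mem_iInter.1 (hzS t) 0
    rw [← h]; exact hy
  have hzE : ∀ t, z t = cfw (w t) (z (t + 1)) := fun t => (hf t _ (hzS t)).2
  have hpos : ∀ t, 0 < z t := by
    intro t
    rw [hzE t]
    have h2 := h1 t
    cases h : w t with
    | nil => exact absurd h (hw t)
    | cons a l =>
      rw [h] at h2
      rw [cfw_cons]
      have := (cfw_mem_Icc (fun b hb => h2 b (List.mem_cons_of_mem _ hb)) (hzI (t+1))).1
      have ha : (1:ℝ) ≤ a := by exact_mod_cast h2 a List.mem_cons_self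
      positivity
  refine ⟨z, fun t => ⟨⟨hpos t, ?_⟩, hzE t⟩⟩
  rw [hzE t]
  have h2 := h1 t
  cases h : w t with
  | nil => exact absurd h (hw t)
  | cons a l =>
    rw [h] at h2
    rw [cfw_cons]
    have := cfw_pos (fun b hb => h2 b (List.mem_cons_of_mem _ hb)) (hpos (t+1))
    have ha : (1:ℝ) ≤ a := by exact_mod_cast h2 a List.mem_cons_self
    rw [div_lt_one (by linarith)]; linarith

lemma floor_cons (a : ℕ) {z : ℝ} (hz : z ∈ Ioo (0:ℝ) 1) : ⌊1 / (1 / ((a:ℝ) + z))⌋₊ = a := by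
  rw [one_div_one_div]
  rw [Nat.floor_eq_iff (by linarith [hz.1, Nat.cast_nonneg (α := ℝ) a])]
  constructor <;> linarith [hz.1, hz.2]

lemma gauss_cons (a : ℕ) {z : ℝ} (hz : z ∈ Ioo (0:ℝ) 1) : gaussMap (1 / ((a:ℝ) + z)) = z := by
  have hp : 0 < 1 / ((a:ℝ) + z) := by have := hz.1; positivity
  have := gauss_inv hp
  rw [floor_cons a hz] at this
  rw [one_div, inv_inv, ← one_div] at this
  linarith

lemma gauss_iter_cfw {l : List ℕ} (hl : ∀ a ∈ l, 1 ≤ a) {z : ℝ} (hz : z ∈ Ioo (0:ℝ) 1) :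
    gaussMap^[l.length] (cfw l z) = z := by
  induction l with
  | nil => rfl
  | cons a l ih =>
    have hl' : ∀ b ∈ l, 1 ≤ b := fun b hb => hl b (List.mem_cons_of_mem _ hb)
    rw [List.length_cons, Function.iterate_succ_apply, cfw_cons, gauss_cons a (cfw_mem_Ioo hl' hz)]
    exact ih hl'

lemma gauss_iter_mem {l : List ℕ} (hl : ∀ a ∈ l, 1 ≤ a) {z : ℝ} (hz : z ∈ Ioo (0:ℝ) 1)
    (i : ℕ) (hi : i < l.length) : gaussMap^[i] (cfw l z) ∈ Ioo (0:ℝ) 1 := by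
  induction l generalizing i with
  | nil => simp at hi
  | cons a l ih =>
    have hl' : ∀ b ∈ l, 1 ≤ b := fun b hb => hl b (List.mem_cons_of_mem _ hb)
    cases i with
    | zero => exact cfw_mem_Ioo hl hz
    | succ i =>
      rw [Function.iterate_succ_apply, cfw_cons, gauss_cons a (cfw_mem_Ioo hl' hz)]
      exact ih hl' i (by simpa using hi)

lemma pq_cfw {l : List ℕ} (hl : ∀ a ∈ l, 1 ≤ a) {z : ℝ} (hz : z ∈ Ioo (0:ℝ) 1)
    (i : ℕ) (hi : i < l.length) : pq (cfw l z) (i + 1) = l[i] := by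
  induction l generalizing i with
  | nil => simp at hi
  | cons a l ih =>
    have hl' : ∀ b ∈ l, 1 ≤ b := fun b hb => hl b (List.mem_cons_of_mem _ hb)
    rw [pq_succ]
    cases i with
    | zero => exact floor_cons a (cfw_mem_Ioo hl' hz)
    | succ i =>
      rw [Function.iterate_succ_apply, cfw_cons, gauss_cons a (cfw_mem_Ioo hl' hz), ← pq_succ]
      exact ih hl' i (by simpa using hi)

lemma cfw_dist {l : List ℕ} (hl : ∀ a ∈ l, 1 ≤ a) {z z' : ℝ} (hz : z ∈ Ioo (0:ℝ) 1)
    (hz' : z' ∈ Ioo (0:ℝ) 1) : |z - z'| = |cfw l z - cfw l z'| *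
      (orbP (cfw l z) l.length * orbP (cfw l z') l.length) := by
  rw [← orb_dist, gauss_iter_cfw hl hz, gauss_iter_cfw hl hz']
  · exact fun i hi => (gauss_iter_mem hl hz i hi).1
  · exact fun i hi => (gauss_iter_mem hl hz' i hi).1
  · exact fun i hi => by rw [pq_cfw hl hz i hi, pq_cfw hl hz' i hi]

/-- block word -/
def bw {n : ℕ} (w : Fin n → ℕ+) : List ℕ := 2 :: (List.ofFn (fun i => (w i : ℕ)) ++ [2])

lemma ofFn_pos {n : ℕ} (w : Fin n → ℕ+) : ∀ a ∈ List.ofFn (fun i => (w i : ℕ)), 1 ≤ a := by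
  intro a ha
  rw [List.mem_ofFn] at ha
  obtain ⟨i, rfl⟩ := ha
  exact (w i).2

lemma bw_pos {n : ℕ} (w : Fin n → ℕ+) : ∀ a ∈ bw w, 1 ≤ a := by
  intro a ha
  rw [bw, List.mem_cons, List.mem_append, List.mem_singleton] at ha
  rcases ha with rfl | ha | rfl
  · norm_num
  · exact ofFn_pos w a ha
  · norm_num

lemma bw_length {n : ℕ} (w : Fin n → ℕ+) : (bw w).length = n + 2 := by
  simp [bw]

lemma cfw_bw {n : ℕ} (w : Fin n → ℕ+) (z : ℝ) :
    cfw (bw w) z = 1 / (2 + cfw (List.ofFn (fun i => (w i : ℕ))) (1 / (2 + z))) := by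
  rw [bw, cfw_cons, cfw_append, cfw_cons, cfw_nil]; norm_num

lemma tail_mem {z : ℝ} (hz : z ∈ Ioo (0:ℝ) 1) : 1 / (2 + z) ∈ Icc (1/3 : ℝ) (1/2) := by
  have := hz.1
  have := hz.2
  constructor
  · rw [div_le_div_iff₀ (by norm_num) (by linarith)]; linarith
  · rw [div_le_div_iff₀ (by linarith) (by norm_num)]; linarith

lemma orbP_bw {n : ℕ} (w : Fin n → ℕ+) {z : ℝ} (hz : z ∈ Ioo (0:ℝ) 1) :
    orbP (cfw (bw w) z) (n + 2) ≤ 18 * contQ n (fun i => (w i : ℕ)) := by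
  have ht : 1 / (2 + z) ∈ Ioo (0:ℝ) 1 := by
    have := tail_mem hz; constructor <;> linarith [this.1, this.2]
  have hl := ofFn_pos w
  set l := List.ofFn (fun i => (w i : ℕ)) with hld
  have hll : l.length = n := by simp [hld]
  have hy := cfw_mem_Ioo hl ht
  have e1 : gaussMap^[1] (cfw (bw w) z) = cfw l (1 / (2 + z)) := by
    rw [cfw_bw, Function.iterate_one]
    exact_mod_cast gauss_cons 2 hy
  have e2 : gaussMap^[n] (cfw l (1 / (2 + z))) = 1 / (2 + z) := by
    have := gauss_iter_cfw hl ht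
    rwa [hll] at this
  have e3 : n + 2 = 1 + (n + 1) := by ring
  rw [e3, orbP_add, e1, orbP_add, e2]
  have o1 : orbP (cfw (bw w) z) 1 = 2 + cfw l (1 / (2 + z)) := by
    rw [orbP, Finset.prod_range_one, Function.iterate_zero, id, cfw_bw, one_div, inv_inv]
  have o2 : orbP (1 / (2 + z)) 1 = 2 + z := by
    rw [orbP, Finset.prod_range_one, Function.iterate_zero, id, one_div, inv_inv]
  have o3 : orbP (cfw l (1 / (2 + z))) n ≤ 2 * contQ n (fun i => (w i : ℕ)) := by
    have := orbP_le_qOf (cfw l (1 / (2 + z))) n (fun i hi => gauss_iter_mem hl ht i (by omega))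
    have e : qOf (cfw l (1 / (2 + z))) n = contQ n (fun i => (w i : ℕ)) := by
      unfold qOf; congr 1; funext i
      rw [pq_cfw hl ht i (by omega)]
      simp [hld]
    rwa [e] at this
  have o4 : 0 ≤ orbP (cfw l (1 / (2 + z))) n :=
    (orbP_pos (fun i hi => (gauss_iter_mem hl ht i (by omega)).1)).le
  rw [o1, o2]
  have a1 : 2 + cfw l (1 / (2 + z)) ≤ 3 := by linarith [hy.2]
  have a2 : 2 + z ≤ 3 := by linarith [hz.2]
  calc _ ≤ 3 * ((2 * (contQ n (fun i => (w i : ℕ)) : ℝ)) * 3) := by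
        have := hz.1
        gcongr
    _ = _ := by ring

lemma bw_same {n : ℕ} (w : Fin n → ℕ+) {z z' : ℝ} (hz : z ∈ Ioo (0:ℝ) 1)
    (hz' : z' ∈ Ioo (0:ℝ) 1) : |z - z'| ≤ (18 * (contQ n (fun i => (w i : ℕ)) : ℝ)) ^ 2 *
      |cfw (bw w) z - cfw (bw w) z'| := by
  rw [cfw_dist (bw_pos w) hz hz', bw_length, mul_comm, pow_two]
  have := orbP_bw w hz
  have := orbP_bw w hz'
  have : 0 ≤ orbP (cfw (bw w) z') (n + 2) :=
    (orbP_pos (fun i hi => (gauss_iter_mem (bw_pos w) hz' i (by rw [bw_length]; omega)).1)).le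
  gcongr

lemma bw_sep_pair {n : ℕ} (w w' : Fin n → ℕ+) (h : w ≠ w') :
    ∃ c > 0, ∀ z ∈ Ioo (0:ℝ) 1, ∀ z' ∈ Ioo (0:ℝ) 1, c ≤ |cfw (bw w) z - cfw (bw w') z'| := by
  set K : Set (ℝ × ℝ) := Icc (1/3 : ℝ) (1/2) ×ˢ Icc (1/3 : ℝ) (1/2) with hK
  have hKc : IsCompact K := isCompact_Icc.prod isCompact_Icc
  have hsub : Icc (1/3 : ℝ) (1/2) ⊆ Icc (0:ℝ) 1 := Icc_subset_Icc (by norm_num) (by norm_num)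
  have hsub' : Icc (1/3 : ℝ) (1/2) ⊆ Ioo (0:ℝ) 1 := fun x hx => ⟨by linarith [hx.1], by linarith [hx.2]⟩
  set g : ℝ × ℝ → ℝ := fun p => |1 / (2 + cfw (List.ofFn (fun i => (w i : ℕ))) p.1) -
    1 / (2 + cfw (List.ofFn (fun i => (w' i : ℕ))) p.2)| with hg
  have hc1 : ContinuousOn (fun p : ℝ × ℝ => cfw (List.ofFn (fun i => (w i : ℕ))) p.1) K :=
    (cfw_cont (ofFn_pos w)).comp continuousOn_fst fun p hp => hsub hp.1
  have hc2 : ContinuousOn (fun p : ℝ × ℝ => cfw (List.ofFn (fun i => (w' i : ℕ))) p.2) K :=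
    (cfw_cont (ofFn_pos w')).comp continuousOn_snd fun p hp => hsub hp.2
  have hgc : ContinuousOn g K := by
    apply ContinuousOn.abs
    apply ContinuousOn.sub
    · refine ContinuousOn.div continuousOn_const (continuousOn_const.add hc1) fun p hp => ?_
      have := (cfw_mem_Ioo (ofFn_pos w) (hsub' hp.1)).1
      linarith
    · refine ContinuousOn.div continuousOn_const (continuousOn_const.add hc2) fun p hp => ?_
      have := (cfw_mem_Ioo (ofFn_pos w') (hsub' hp.2)).1
      linarith
  obtain ⟨p, hp, hmin⟩ := hKc.exists_isMinOn ⟨(1/3, 1/3), by norm_num [hK]⟩ hgc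
  refine ⟨g p, ?_, ?_⟩
  · rw [gt_iff_lt, hg, abs_pos, sub_ne_zero]
    intro he
    rw [one_div, one_div, inv_inj] at he
    have he' := add_left_cancel he
    apply h
    funext i
    have h1 := pq_cfw (ofFn_pos w) (hsub' hp.1) i (by simp)
    have h2 := pq_cfw (ofFn_pos w') (hsub' hp.2) i (by simp)
    rw [he', h2] at h1
    simp at h1
    exact h1.symm
  · intro z hz z' hz'
    have := hmin (show ((1 / (2 + z), 1 / (2 + z')) : ℝ × ℝ) ∈ K from ⟨tail_mem hz, tail_mem hz'⟩)
    rw [cfw_bw, cfw_bw]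
    exact this

lemma bw_sep {n : ℕ} (A : Finset (Fin n → ℕ+)) :
    ∃ c > 0, ∀ w ∈ A, ∀ w' ∈ A, w ≠ w' → ∀ z ∈ Ioo (0:ℝ) 1, ∀ z' ∈ Ioo (0:ℝ) 1,
      c ≤ |cfw (bw w) z - cfw (bw w') z'| := by
  have : ∀ᶠ c : ℝ in nhdsWithin 0 (Ioi 0), ∀ w ∈ A, ∀ w' ∈ A, w ≠ w' → ∀ z ∈ Ioo (0:ℝ) 1, ∀ z' ∈ Ioo (0:ℝ) 1,
      c ≤ |cfw (bw w) z - cfw (bw w') z'| := by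
    rw [Finset.eventually_all]; intro w _
    rw [Finset.eventually_all]; intro w' _
    by_cases h : w = w'
    · exact Eventually.of_forall fun c hc => absurd h hc
    · obtain ⟨c, hc, hh⟩ := bw_sep_pair w w' h
      filter_upwards [Ioo_mem_nhdsGT hc] with d hd _ z hz z' hz'
      exact hd.2.le.trans (hh z hz z' hz')
  obtain ⟨c, h1, h2⟩ := (this.and self_mem_nhdsWithin).exists
  exact ⟨c, h2, h1⟩

lemma bw_le_half {n : ℕ} (w : Fin n → ℕ+) {z : ℝ} (hz : z ∈ Ioo (0:ℝ) 1) : cfw (bw w) z ≤ 1 / 2 := by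
  rw [cfw_bw]
  have ht : 1 / (2 + z) ∈ Ioo (0:ℝ) 1 := by
    have := tail_mem hz; constructor <;> linarith [this.1, this.2]
  have := (cfw_mem_Ioo (ofFn_pos w) ht).1
  rw [div_le_div_iff₀ (by linarith) (by norm_num)]; linarith

/-- a rational number has a terminating expansion -/
lemma rat_terminates (b : ℕ) : ∀ a : ℕ, a < b → ∃ n, gaussMap^[n] ((a : ℝ) / b) = 0 := by
  induction b using Nat.strong_induction_on with
  | _ b ih =>
    intro a hab
    rcases Nat.eq_zero_or_pos a with rfl | ha
    · exact ⟨0, by simp⟩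
    · obtain ⟨n, hn⟩ := ih a hab (b % a) (Nat.mod_lt _ ha)
      refine ⟨n + 1, ?_⟩
      rw [Function.iterate_succ_apply]
      have : gaussMap ((a:ℝ) / b) = ((b % a : ℕ) : ℝ) / a := by
        have ha' : (0:ℝ) < a := by exact_mod_cast ha
        have h1 := gauss_inv (show (0:ℝ) < (a:ℝ) / b by
          have : (0:ℝ) < b := by exact_mod_cast (by omega : 0 < b)
          positivity)
        rw [one_div_div, Nat.floor_div_eq_div, inv_div] at h1
        have h2 : (b:ℝ) = a * ((b / a : ℕ) : ℝ) + ((b % a : ℕ) : ℝ) := by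
          exact_mod_cast (Nat.div_add_mod b a).symm
        rw [eq_div_iff ha'.ne']
        have h3 : (b:ℝ) = (((b / a : ℕ) : ℝ) + gaussMap ((a:ℝ) / b)) * a := by
          rw [← h1]; field_simp
        linarith
      rw [this]; exact hn

lemma irr_of_iter {x : ℝ} (hx : x ∈ Ioo (0:ℝ) 1) (h : ∀ N : ℕ, ∃ n ≥ N, gaussMap^[n] x ≠ 0) :
    Irrational x := by
  rintro ⟨r, rfl⟩
  have hr0 : (0:ℚ) < r := by exact_mod_cast hx.1
  have hr1 : r < 1 := by exact_mod_cast hx.2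
  obtain ⟨N, hN⟩ := rat_terminates r.den r.num.toNat (by
    have := Rat.num_lt_denom_iff.2 hr1
    have h2 := Rat.num_pos.2 hr0
    omega)
  have e : ((r.num.toNat : ℕ) : ℝ) / (r.den : ℝ) = (r : ℝ) := by
    have h2 := Rat.num_pos.2 hr0
    have h3 : ((r.num.toNat : ℕ) : ℝ) = ((r.num : ℤ) : ℝ) := by
      have : ((r.num.toNat : ℕ) : ℤ) = r.num := by omega
      exact_mod_cast this
    rw [h3]; exact_mod_cast Rat.num_div_den r
  rw [e] at hN
  obtain ⟨n, hn, hne⟩ := h N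
  apply hne
  obtain ⟨k, rfl⟩ := Nat.exists_eq_add_of_le hn
  rw [add_comm, Function.iterate_add_apply, hN]
  have g0 : gaussMap 0 = 0 := by simp [gaussMap]
  exact Function.iterate_fixed g0 k


lemma partition_exists {ι : Type*} [Nonempty ι] (p : ι → ℝ) (A : Finset ι) (hp : ∀ a ∈ A, 0 < p a) :
    ∃ (D : ℝ → ι) (G : ℝ → ℝ), (∀ y, 0 ≤ y → y < ∑ a ∈ A, p a → D y ∈ A ∧ G y ∈ Ico (0:ℝ) 1) ∧
      ∀ y y', 0 ≤ y → y < ∑ a ∈ A, p a → 0 ≤ y' → y' < ∑ a ∈ A, p a → D y = D y' →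
        |y - y'| ≤ p (D y) * |G y - G y'| := by
  classical
  induction A using Finset.induction_on with
  | empty =>
    refine ⟨fun _ => Classical.arbitrary ι, fun _ => 0, ?_, ?_⟩
    · intro y h1 h2; simp at h2; linarith
    · intro y y' h1 h2; simp at h2; linarith
  | insert a A ha ih =>
    obtain ⟨D, G, h1, h2⟩ := ih fun b hb => hp b (Finset.mem_insert_of_mem hb)
    have hpa := hp a (Finset.mem_insert_self _ _)
    rw [Finset.sum_insert ha]
    set S := ∑ b ∈ A, p b with hS
    refine ⟨fun y => if y < S then D y else a, fun y => if y < S then G y else (y - S) / p a, ?_, ?_⟩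
    · intro y h0 hy
      by_cases hlt : y < S
      · simp only [hlt, if_true]
        exact ⟨Finset.mem_insert_of_mem (h1 y h0 hlt).1, (h1 y h0 hlt).2⟩
      · simp only [hlt, if_false]
        refine ⟨Finset.mem_insert_self _ _, ?_, ?_⟩
        · apply div_nonneg _ hpa.le; linarith
        · rw [div_lt_one hpa]; linarith
    · intro y y' h0 hy h0' hy'
      by_cases hlt : y < S <;> by_cases hlt' : y' < S <;> simp only [hlt, hlt', if_true, if_false]
      · exact h2 y y' h0 hlt h0' hlt'
      · intro h; exact absurd (h ▸ (h1 y h0 hlt).1) ha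
      · intro h; exact absurd (h ▸ (h1 y' h0' hlt').1) ha
      · intro _
        rw [← sub_div, abs_div, abs_of_pos hpa, mul_div_cancel₀ _ hpa.ne']
        apply le_of_eq; congr 1; ring

/-- orbit of the digit coding -/
noncomputable def yOrb (G : ℕ → ℝ → ℝ) (u : ℝ) : ℕ → ℝ
  | 0 => u
  | (t + 1) => G t (yOrb G u t)

theorem coding {s : ℝ} (hs : 0 < s) (hs1 : s ≤ 1) (E : Set ℝ)
    (W : ℕ → ℝ → List ℕ) (G : ℕ → ℝ → ℝ) (r : ℕ → ℝ) (κ C : ℝ) (hr : ∀ t, 0 < r t)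
    (hκ0 : 0 ≤ κ) (hκ : κ < 1) (hC : 0 ≤ C)
    (hG : ∀ t, ∀ y ∈ Ico (0:ℝ) 1, G t y ∈ Ico (0:ℝ) 1)
    (hW : ∀ t, ∀ y ∈ Ico (0:ℝ) 1, W t y ≠ [] ∧ (∀ a ∈ W t y, 1 ≤ a) ∧
      ∀ z ∈ Ioo (0:ℝ) 1, cfw (W t y) z ≤ 1 / 2)
    (hsame : ∀ t, ∀ y ∈ Ico (0:ℝ) 1, ∀ y' ∈ Ico (0:ℝ) 1, W t y = W t y' →
      ∃ μ Q : ℝ, 0 < μ ∧ μ ≤ κ ∧ 0 < Q ∧ μ * Q ^ s ≤ r t ∧ |y - y'| ≤ μ * |G t y - G t y'| ∧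
        ∀ z ∈ Ioo (0:ℝ) 1, ∀ z' ∈ Ioo (0:ℝ) 1,
          |z - z'| ≤ Q * |cfw (W t y) z - cfw (W t y') z'|)
    (hdiff : ∀ t, ∀ y ∈ Ico (0:ℝ) 1, ∀ y' ∈ Ico (0:ℝ) 1, W t y ≠ W t y' →
      ∀ z ∈ Ioc (0:ℝ) (1/2), ∀ z' ∈ Ioc (0:ℝ) (1/2),
        (∏ i ∈ Finset.range t, r i) * |y - y'| ≤ C * |cfw (W t y) z - cfw (W t y') z'| ^ s)
    (hE : ∀ (y z : ℕ → ℝ), (∀ t, y t ∈ Ico (0:ℝ) 1) → (∀ t, y (t+1) = G t (y t)) →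
      (∀ t, z t ∈ Ioo (0:ℝ) 1) → (∀ t, z t = cfw (W t (y t)) (z (t+1))) → z 0 ∈ E) :
    ENNReal.ofReal s ≤ dimH E := by
  have hy : ∀ u ∈ Ico (0:ℝ) 1, ∀ t, yOrb G u t ∈ Ico (0:ℝ) 1 := by
    intro u hu t
    induction t with
    | zero => exact hu
    | succ t ih => exact hG t _ ih
  have hz : ∀ u : ℝ, ∃ z : ℕ → ℝ, u ∈ Ico (0:ℝ) 1 → ∀ t, z t ∈ Ioo (0:ℝ) 1 ∧
      z t = cfw (W t (yOrb G u t)) (z (t+1)) := by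
    intro u
    by_cases hu : u ∈ Ico (0:ℝ) 1
    · obtain ⟨z, hz⟩ := cf_exists (fun t => W t (yOrb G u t)) (fun t => (hW t _ (hy u hu t)).1)
        (fun t => (hW t _ (hy u hu t)).2.1)
      exact ⟨z, fun _ => hz⟩
    · exact ⟨fun _ => 0, fun h => absurd h hu⟩
  choose z hz using hz
  have hhalf : ∀ u ∈ Ico (0:ℝ) 1, ∀ t, z u t ∈ Ioc (0:ℝ) (1/2) := by
    intro u hu t
    refine ⟨(hz u hu t).1.1, ?_⟩
    rw [(hz u hu t).2]
    exact (hW t _ (hy u hu t)).2.2 _ (hz u hu (t+1)).1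
  have hRpos : ∀ t, 0 < ∏ i ∈ Finset.range t, r i := fun t => Finset.prod_pos fun i _ => hr i
  have key : ∀ u ∈ Ico (0:ℝ) 1, ∀ v ∈ Ico (0:ℝ) 1, ∀ t,
      (∀ i < t, W i (yOrb G u i) = W i (yOrb G v i)) →
      ∃ μ Q : ℝ, 0 < μ ∧ μ ≤ κ ^ t ∧ 0 < Q ∧ μ * Q ^ s ≤ ∏ i ∈ Finset.range t, r i ∧
        |u - v| ≤ μ * |yOrb G u t - yOrb G v t| ∧ |z u t - z v t| ≤ Q * |z u 0 - z v 0| := by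
    intro u hu v hv t
    induction t with
    | zero =>
      intro _
      exact ⟨1, 1, by norm_num, by simp, by norm_num, by simp, by simp [yOrb], by simp⟩
    | succ t ih =>
      intro h
      obtain ⟨μ, Q, h1, h2, h3, h4, h5, h6⟩ := ih fun i hi => h i (by omega)
      obtain ⟨μ', Q', g1, g2, g3, g4, g5, g6⟩ := hsame t _ (hy u hu t) _ (hy v hv t) (h t (by omega))
      have g7 := g6 _ (hz u hu (t+1)).1 _ (hz v hv (t+1)).1
      rw [← (hz u hu t).2, ← (hz v hv t).2] at g7
      refine ⟨μ * μ', Q * Q', by positivity, ?_, by positivity, ?_, ?_, ?_⟩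
      · rw [pow_succ]; exact mul_le_mul h2 g2 g1.le (by positivity)
      · rw [Finset.prod_range_succ, Real.mul_rpow h3.le g3.le]
        calc μ * μ' * (Q ^ s * Q' ^ s) = (μ * Q ^ s) * (μ' * Q' ^ s) := by ring
          _ ≤ _ := mul_le_mul h4 g4 (by positivity) (hRpos t).le
      · calc |u - v| ≤ μ * |yOrb G u t - yOrb G v t| := h5
          _ ≤ μ * (μ' * |G t (yOrb G u t) - G t (yOrb G v t)|) := by gcongr
          _ = _ := by rw [← mul_assoc]; rfl
      · calc _ ≤ Q' * |z u t - z v t| := g7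
          _ ≤ Q' * (Q * |z u 0 - z v 0|) := by gcongr
          _ = _ := by ring
  have hol : ∀ u ∈ Ico (0:ℝ) 1, ∀ v ∈ Ico (0:ℝ) 1, |u - v| ≤ C * |z u 0 - z v 0| ^ s := by
    intro u hu v hv
    classical
    by_cases hall : ∀ i, W i (yOrb G u i) = W i (yOrb G v i)
    · have hb : ∀ t, |u - v| ≤ κ ^ t := by
        intro t
        obtain ⟨μ, Q, h1, h2, h3, h4, h5, h6⟩ := key u hu v hv t fun i _ => hall i
        have : |yOrb G u t - yOrb G v t| ≤ 1 := by
          have a := hy u hu t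
          have b := hy v hv t
          rw [abs_le]; constructor <;> linarith [a.1, a.2, b.1, b.2]
        calc |u - v| ≤ μ * |yOrb G u t - yOrb G v t| := h5
          _ ≤ μ * 1 := by gcongr
          _ ≤ _ := by linarith
      have h0 : |u - v| ≤ 0 := ge_of_tendsto' (tendsto_pow_atTop_nhds_zero_of_lt_one hκ0 hκ) hb
      exact h0.trans (by positivity)
    · push Not at hall
      have hne := Nat.find_spec hall
      have hlt : ∀ i < Nat.find hall, W i (yOrb G u i) = W i (yOrb G v i) := fun i hi => by
        have := Nat.find_min hall hi
        push Not at this; exact this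
      obtain ⟨t, ht⟩ : ∃ t, t = Nat.find hall := ⟨_, rfl⟩
      rw [← ht] at hne hlt
      obtain ⟨μ, Q, h1, h2, h3, h4, h5, h6⟩ := key u hu v hv t hlt
      have h7 := hdiff t _ (hy u hu t) _ (hy v hv t) hne _ (hhalf u hu (t+1)) _ (hhalf v hv (t+1))
      rw [← (hz u hu t).2, ← (hz v hv t).2] at h7
      have hR := hRpos t
      set R := ∏ i ∈ Finset.range t, r i
      have h8 : |z u t - z v t| ^ s ≤ Q ^ s * |z u 0 - z v 0| ^ s := by
        rw [← Real.mul_rpow h3.le (abs_nonneg _)]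
        exact Real.rpow_le_rpow (abs_nonneg _) h6 hs.le
      have h9 : R * |u - v| ≤ R * (C * |z u 0 - z v 0| ^ s) := by
        calc R * |u - v| ≤ R * (μ * |yOrb G u t - yOrb G v t|) := by gcongr
          _ = μ * (R * |yOrb G u t - yOrb G v t|) := by ring
          _ ≤ μ * (C * |z u t - z v t| ^ s) := by gcongr
          _ ≤ μ * (C * (Q ^ s * |z u 0 - z v 0| ^ s)) := by gcongr
          _ = (μ * Q ^ s) * (C * |z u 0 - z v 0| ^ s) := by ring
          _ ≤ _ := by gcongr
      exact le_of_mul_le_mul_left h9 hR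
  set X : ℝ → ℝ := fun u => z u 0 with hX
  have hinj : InjOn X (Ico (0:ℝ) 1) := by
    intro u hu v hv huv
    have := hol u hu v hv
    have e : z u 0 - z v 0 = 0 := sub_eq_zero.2 huv
    rw [e, abs_zero, Real.zero_rpow hs.ne', mul_zero] at this
    exact sub_eq_zero.1 (abs_eq_zero.1 (le_antisymm this (abs_nonneg _)))
  have hsub : X '' Ico (0:ℝ) 1 ⊆ E := by
    rintro _ ⟨u, hu, rfl⟩
    exact hE (yOrb G u) (z u) (hy u hu) (fun t => rfl) (fun t => (hz u hu t).1) (fun t => (hz u hu t).2)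
  set g := Function.invFunOn X (Ico (0:ℝ) 1) with hg
  have hgX : ∀ u ∈ Ico (0:ℝ) 1, g (X u) = u := fun u hu => hinj.leftInvOn_invFunOn hu
  have hhol : HolderOnWith (Real.toNNReal C) (Real.toNNReal s) g (X '' Ico (0:ℝ) 1) := by
    rintro _ ⟨u, hu, rfl⟩ _ ⟨v, hv, rfl⟩
    rw [hgX u hu, hgX v hv, edist_dist, edist_dist, Real.dist_eq, Real.dist_eq,
      Real.coe_toNNReal s hs.le, ENNReal.ofReal_rpow_of_nonneg (abs_nonneg _) hs.le]
    change _ ≤ ENNReal.ofReal C * _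
    rw [← ENNReal.ofReal_mul hC]
    exact ENNReal.ofReal_le_ofReal (hol u hu v hv)
  have himg : g '' (X '' Ico (0:ℝ) 1) = Ico (0:ℝ) 1 := by
    rw [image_image]
    ext v; constructor
    · rintro ⟨u, hu, rfl⟩; simpa [hgX u hu] using hu
    · intro hv; exact ⟨v, hv, hgX v hv⟩
  have hd := hhol.dimH_image_le (Real.toNNReal_pos.2 hs)
  rw [himg, Real.dimH_of_nonempty_interior (by rw [interior_Ico]; exact ⟨1/2, by norm_num, by norm_num⟩)] at hd
  rw [Module.finrank_self, Nat.cast_one] at hd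
  have hd2 : (1:ENNReal) ≤ dimH E / ENNReal.ofReal s := hd.trans (by
    apply ENNReal.div_le_div_right; exact dimH_mono hsub)
  rw [ENNReal.le_div_iff_mul_le (Or.inl (by simpa using hs)) (Or.inl ENNReal.ofReal_ne_top), one_mul] at hd2
  exact hd2


lemma alphabet {B F s : ℝ} (hB : 1 ≤ B) (hF : 0 ≤ F) (hs : 0 < s) (h : ¬ pressOK B F s) :
    ∃ (n : ℕ) (A : Finset (Fin n → ℕ+)) (ρ : ℝ), 0 < ρ ∧ ρ < 1 ∧ ρ * B ^ (F * ((n + 2 : ℕ) : ℝ)) < 1 ∧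
      1 ≤ ∑ w ∈ A, ρ * (18 * (contQ n (fun i => (w i : ℕ)) : ℝ)) ^ (-(2 * s)) := by
  have hB0 : 0 < B := by linarith
  obtain ⟨δ, hδ, hfr⟩ := not_pressOK h
  set c : ℝ := Real.exp (-δ) * B ^ (-(2 * F)) * 18 ^ (-(2 * s)) with hc
  have hc0 : 0 < c := by positivity
  have hlim : Tendsto (fun n : ℕ => c * Real.exp (δ / 2 * n)) atTop atTop := by
    apply Tendsto.const_mul_atTop hc0
    apply Real.tendsto_exp_atTop.comp
    exact Tendsto.const_mul_atTop (by positivity) tendsto_natCast_atTop_atTop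
  obtain ⟨n, hn, hn2⟩ := (hfr.and_eventually (hlim.eventually_gt_atTop 1)).exists
  set ρ : ℝ := Real.exp (-(δ / 2 * ((n + 2 : ℕ) : ℝ))) * B ^ (-(F * ((n + 2 : ℕ) : ℝ))) with hρ
  have hρ0 : 0 < ρ := by positivity
  have hexp : Real.exp (-(δ / 2 * ((n + 2 : ℕ) : ℝ))) < 1 := by
    rw [Real.exp_lt_one_iff]
    have : (0:ℝ) < ((n + 2 : ℕ) : ℝ) := by positivity
    have := mul_pos (half_pos hδ) this
    linarith
  have hρB : ρ * B ^ (F * ((n + 2 : ℕ) : ℝ)) < 1 := by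
    rw [hρ, mul_assoc, ← Real.rpow_add hB0, neg_add_cancel, Real.rpow_zero, mul_one]
    exact hexp
  have hρ1 : ρ < 1 := by
    have : B ^ (-(F * ((n + 2 : ℕ) : ℝ))) ≤ 1 := by
      apply Real.rpow_le_one_of_one_le_of_nonpos hB
      have : 0 ≤ F * ((n + 2 : ℕ) : ℝ) := by positivity
      linarith
    calc ρ ≤ Real.exp (-(δ / 2 * ((n + 2 : ℕ) : ℝ))) * 1 := by rw [hρ]; gcongr
      _ < 1 := by linarith
  have hsum : (1:ENNReal) < ∑' w : Fin n → ℕ+, ENNReal.ofReal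
      (ρ * (18 * (contQ n (fun i => (w i : ℕ)) : ℝ)) ^ (-(2 * s))) := by
    have e : ∀ w : Fin n → ℕ+, ENNReal.ofReal
      (ρ * (18 * (contQ n (fun i => (w i : ℕ)) : ℝ)) ^ (-(2 * s))) =
        ENNReal.ofReal (c * Real.exp (-(δ / 2 * n))) * ENNReal.ofReal (B ^ (-(n:ℝ)*F) * (contQ n fun i => (w i:ℕ):ℝ)^(-(2*s))) := by
      intro w
      rw [← ENNReal.ofReal_mul (by positivity)]
      congr 1
      rw [Real.mul_rpow (by norm_num) (by positivity), hρ, hc]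
      have e1 : Real.exp (-(δ / 2 * ((n + 2 : ℕ) : ℝ))) = Real.exp (-δ) * Real.exp (-(δ / 2 * n)) := by
        rw [← Real.exp_add]; congr 1; push_cast; ring
      have e2 : B ^ (-(F * ((n + 2 : ℕ) : ℝ))) = B ^ (-(2 * F)) * B ^ (-(n:ℝ)*F) := by
        rw [← Real.rpow_add hB0]; congr 1; push_cast; ring
      rw [e1, e2]; ring
    rw [tsum_congr e, ENNReal.tsum_mul_left]
    have h3 : (1:ENNReal) < ENNReal.ofReal (c * Real.exp (-(δ / 2 * n))) * ENNReal.ofReal (Real.exp (δ * n)) := by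
      rw [← ENNReal.ofReal_mul (by positivity), mul_assoc, ← Real.exp_add,
        show -(δ / 2 * (n:ℝ)) + δ * n = δ / 2 * n by ring, ENNReal.one_lt_ofReal]
      exact hn2
    exact h3.trans_le (mul_le_mul_right hn _)
  rw [ENNReal.tsum_eq_iSup_sum, lt_iSup_iff] at hsum
  obtain ⟨A, hA⟩ := hsum
  refine ⟨n, A, ρ, hρ0, hρ1, hρB, ?_⟩
  rw [← ENNReal.ofReal_sum_of_nonneg (fun w _ => by positivity), ENNReal.one_lt_ofReal] at hA
  exact hA.le


/-! ### special levels -/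

lemma sp_floor_lt {L : ℕ} (hL : 2 ≤ L) {y : ℝ} (hy : y ∈ Ico (0:ℝ) 1) : ⌊(L:ℝ) * y⌋₊ + 1 ≤ L := by
  have hLp : (0:ℝ) < L := by positivity
  have : ⌊(L:ℝ) * y⌋₊ < L := by
    rw [Nat.floor_lt (mul_nonneg hLp.le hy.1)]
    nlinarith [hy.2]
  omega

lemma sp_same {L : ℕ} (hL : 2 ≤ L) {y y' : ℝ} (hy : y ∈ Ico (0:ℝ) 1) (hy' : y' ∈ Ico (0:ℝ) 1)
    (h : ⌊(L:ℝ) * y⌋₊ = ⌊(L:ℝ) * y'⌋₊) :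
    |y - y'| ≤ (1 / (L:ℝ)) * |Int.fract ((L:ℝ) * y) - Int.fract ((L:ℝ) * y')| := by
  have hLp : (0:ℝ) < L := by positivity
  have h1 := mul_nonneg hLp.le hy.1
  have h2 := mul_nonneg hLp.le hy'.1
  have e : (⌊(L:ℝ) * y⌋ : ℝ) = ⌊(L:ℝ) * y'⌋ := by
    rw [← natCast_floor_eq_intCast_floor h1, ← natCast_floor_eq_intCast_floor h2, h]
  have e2 : Int.fract ((L:ℝ) * y) - Int.fract ((L:ℝ) * y') = L * (y - y') := by
    rw [Int.fract, Int.fract, e]; ring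
  rw [e2, abs_mul, abs_of_pos hLp, ← mul_assoc, one_div, inv_mul_cancel₀ hLp.ne', one_mul]

lemma sp_z {a : ℕ} {L : ℕ} (ha : 1 ≤ a) (haL : a + 1 ≤ 2 * L) {z z' : ℝ} (hz : z ∈ Ioo (0:ℝ) 1)
    (hz' : z' ∈ Ioo (0:ℝ) 1) :
    |z - z'| ≤ (2 * (L:ℝ)) ^ 2 * |cfw [a] z - cfw [a] z'| := by
  rw [cfw_cons, cfw_cons, cfw_nil, cfw_nil]
  have h1 : (1:ℝ) ≤ a := by exact_mod_cast ha
  have h2 : (a:ℝ) + 1 ≤ 2 * L := by exact_mod_cast haL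
  have p1 : 0 < (a:ℝ) + z := by linarith [hz.1]
  have p2 : 0 < (a:ℝ) + z' := by linarith [hz'.1]
  have e : 1 / ((a:ℝ) + z) - 1 / ((a:ℝ) + z') = (z' - z) / ((a + z) * (a + z')) := by
    field_simp; ring
  rw [e, abs_div, abs_of_pos (mul_pos p1 p2), abs_sub_comm z' z, mul_div_assoc', le_div_iff₀ (mul_pos p1 p2),
    mul_comm]
  apply mul_le_mul_of_nonneg_right _ (abs_nonneg _)
  rw [pow_two]
  exact mul_le_mul (by linarith [hz.2]) (by linarith [hz'.2]) p2.le (by linarith)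

lemma sp_diff_z {a b L : ℕ} (hab : a < b) (hL : 2 ≤ L) (hLa : L ≤ a) (hbL : b + 1 ≤ 2 * L) {z z' : ℝ}
    (hz : z ∈ Ioc (0:ℝ) (1/2)) (hz' : z' ∈ Ioc (0:ℝ) (1/2)) :
    ((b:ℝ) - a) / (8 * L ^ 2) ≤ |cfw [a] z - cfw [b] z'| := by
  rw [cfw_cons, cfw_cons, cfw_nil, cfw_nil]
  have h0 : (2:ℝ) ≤ L := by exact_mod_cast hL
  have h1 : (L:ℝ) ≤ a := by exact_mod_cast hLa
  have h2 : (b:ℝ) + 1 ≤ 2 * L := by exact_mod_cast hbL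
  have h3 : (a:ℝ) + 1 ≤ b := by exact_mod_cast hab
  have p1 : 0 < (a:ℝ) + z := by linarith [hz.1]
  have p2 : 0 < (b:ℝ) + z' := by linarith [hz'.1]
  have e : 1 / ((a:ℝ) + z) - 1 / ((b:ℝ) + z') = ((b - a) + (z' - z)) / ((a + z) * (b + z')) := by
    field_simp; ring
  refine le_trans ?_ (le_abs_self _)
  rw [e, div_le_div_iff₀ (by positivity) (mul_pos p1 p2)]
  have k1 : ((a:ℝ) + z) * (b + z') ≤ (2 * L) * (2 * L) :=
    mul_le_mul (by linarith [hz.2]) (by linarith [hz'.2]) p2.le (by linarith)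
  have k2 : ((b:ℝ) - a) ≤ 2 * ((b - a) + (z' - z)) := by linarith [hz.2, hz'.1]
  calc ((b:ℝ) - a) * (((a:ℝ) + z) * (b + z')) ≤ ((b:ℝ) - a) * ((2 * L) * (2 * L)) :=
        mul_le_mul_of_nonneg_left k1 (by linarith)
    _ ≤ (2 * ((b - a) + (z' - z))) * ((2 * L) * (2 * L)) :=
        mul_le_mul_of_nonneg_right k2 (by positivity)
    _ = _ := by ring

lemma sp_diff_aux {L : ℕ} (hL : 2 ≤ L) {s R M : ℝ} (hs : 0 < s) (hs1 : s ≤ 1) (hR : 0 ≤ R)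
    (hM : R * (L:ℝ) ^ s ≤ M) {y y' : ℝ} (hy : y ∈ Ico (0:ℝ) 1) (hy' : y' ∈ Ico (0:ℝ) 1)
    (h : ⌊(L:ℝ) * y⌋₊ < ⌊(L:ℝ) * y'⌋₊) {z z' : ℝ}
    (hz : z ∈ Ioc (0:ℝ) (1/2)) (hz' : z' ∈ Ioc (0:ℝ) (1/2)) :
    R * |y - y'| ≤ 16 * M * |cfw [L + ⌊(L:ℝ) * y⌋₊] z - cfw [L + ⌊(L:ℝ) * y'⌋₊] z'| ^ s := by
  have hLp : (0:ℝ) < L := by positivity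
  have f1 := sp_floor_lt hL hy'
  have hd := sp_diff_z (a := L + ⌊(L:ℝ) * y⌋₊) (b := L + ⌊(L:ℝ) * y'⌋₊) (L := L) (by omega) hL
    (by omega) (by omega) hz hz'
  set V := |cfw [L + ⌊(L:ℝ) * y⌋₊] z - cfw [L + ⌊(L:ℝ) * y'⌋₊] z'| with hV
  push_cast at hd
  have g1 := Nat.floor_le (mul_nonneg hLp.le hy.1)
  have g2 := Nat.lt_floor_add_one ((L:ℝ) * y)
  have g3 := Nat.floor_le (mul_nonneg hLp.le hy'.1)
  have g4 := Nat.lt_floor_add_one ((L:ℝ) * y')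
  set d := ⌊(L:ℝ) * y⌋₊
  set d' := ⌊(L:ℝ) * y'⌋₊
  have hdd : (d:ℝ) + 1 ≤ d' := by exact_mod_cast h
  have hY : L * |y - y'| ≤ 2 * ((d':ℝ) - d) := by
    rw [← abs_of_pos hLp, ← abs_mul, abs_le]
    constructor <;> linarith
  have hY1 : |y - y'| ≤ 1 := by
    rw [abs_le]; constructor <;> linarith [hy.1, hy.2, hy'.1, hy'.2]
  have hYV : |y - y'| ≤ 16 * L * V := by
    have : (d':ℝ) - d ≤ 8 * L ^ 2 * V := by
      have := (div_le_iff₀ (by positivity)).1 hd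
      linarith
    have k : L * |y - y'| ≤ L * (16 * L * V) := by nlinarith
    exact le_of_mul_le_mul_left k hLp
  have hV0 : 0 ≤ V := abs_nonneg _
  have h1 : |y - y'| ≤ |y - y'| ^ s := by
    rcases (abs_nonneg (y - y')).eq_or_lt with h0 | h0
    · rw [← h0]; positivity
    · calc |y - y'| = |y - y'| ^ (1:ℝ) := (Real.rpow_one _).symm
        _ ≤ _ := Real.rpow_le_rpow_of_exponent_ge h0 hY1 hs1
  have h2 : |y - y'| ^ s ≤ 16 * (L:ℝ) ^ s * V ^ s := by
    calc |y - y'| ^ s ≤ (16 * L * V) ^ s := Real.rpow_le_rpow (abs_nonneg _) hYV hs.le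
      _ = (16:ℝ) ^ s * (L:ℝ) ^ s * V ^ s := by
        rw [Real.mul_rpow (by positivity) hV0, Real.mul_rpow (by positivity) hLp.le]
      _ ≤ 16 * (L:ℝ) ^ s * V ^ s := by
        have : (16:ℝ) ^ s ≤ 16 := by
          calc (16:ℝ) ^ s ≤ 16 ^ (1:ℝ) := Real.rpow_le_rpow_of_exponent_le (by norm_num) hs1
            _ = 16 := Real.rpow_one _
        gcongr
  calc R * |y - y'| ≤ R * (16 * (L:ℝ) ^ s * V ^ s) := mul_le_mul_of_nonneg_left (h1.trans h2) hR
    _ = 16 * (R * (L:ℝ) ^ s) * V ^ s := by ring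
    _ ≤ _ := by gcongr

lemma sp_diff {L : ℕ} (hL : 2 ≤ L) {s R M : ℝ} (hs : 0 < s) (hs1 : s ≤ 1) (hR : 0 ≤ R)
    (hM : R * (L:ℝ) ^ s ≤ M) {y y' : ℝ} (hy : y ∈ Ico (0:ℝ) 1) (hy' : y' ∈ Ico (0:ℝ) 1)
    (h : ⌊(L:ℝ) * y⌋₊ ≠ ⌊(L:ℝ) * y'⌋₊) {z z' : ℝ}
    (hz : z ∈ Ioc (0:ℝ) (1/2)) (hz' : z' ∈ Ioc (0:ℝ) (1/2)) :
    R * |y - y'| ≤ 16 * M * |cfw [L + ⌊(L:ℝ) * y⌋₊] z - cfw [L + ⌊(L:ℝ) * y'⌋₊] z'| ^ s := by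
  rcases lt_or_gt_of_ne h with h | h
  · exact sp_diff_aux hL hs hs1 hR hM hy hy' h hz hz'
  · rw [abs_sub_comm y, abs_sub_comm (cfw _ z)]
    exact sp_diff_aux hL hs hs1 hR hM hy' hy h hz' hz

/-! ### the schedule -/

/-- state of the construction schedule -/
structure Sched where
  R : ℝ
  n : ℕ
  o : ℕ
  j : ℕ

/-- the real size of the digit at a special level -/
noncomputable def spX (B F s : ℝ) (S : Sched) : ℝ := B ^ ((S.o:ℝ) * (cE s F (S.j + 1) - cE s F S.j))

/-- the number of digits at a special level -/
noncomputable def spL (B F s : ℝ) (S : Sched) : ℕ := ⌈spX B F s S⌉₊ + 1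

/-- the ratio at a level -/
noncomputable def spr (m : ℕ) (B F s ρ : ℝ) (S : Sched) : ℝ :=
  if S.j < m then (1 / (spL B F s S : ℝ)) * ((2 * (spL B F s S : ℝ)) ^ 2) ^ s else ρ

open Classical in
/-- one step of the schedule -/
noncomputable def schedStep (m N : ℕ) (B F s ρ : ℝ) (S : Sched) : Sched :=
  if S.j < m then ⟨S.R * spr m B F s ρ S, S.n + 1, S.o, S.j + 1⟩
  else if S.R * ρ * B ^ (F * (S.n + N + 1 : ℕ)) ≤ 1 then ⟨S.R * spr m B F s ρ S, S.n + N, S.n + N + 1, 0⟩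
  else ⟨S.R * spr m B F s ρ S, S.n + N, S.o, S.j⟩

/-- the schedule -/
noncomputable def sched (m N : ℕ) (B F s ρ : ℝ) (t : ℕ) : Sched :=
  (schedStep m N B F s ρ)^[t] ⟨1, 0, 0, m⟩

lemma sched_succ (m N : ℕ) (B F s ρ : ℝ) (t : ℕ) :
    sched m N B F s ρ (t + 1) = schedStep m N B F s ρ (sched m N B F s ρ t) :=
  Function.iterate_succ_apply' _ _ _

lemma sched_R (m N : ℕ) (B F s ρ : ℝ) (t : ℕ) :
    (sched m N B F s ρ t).R = ∏ i ∈ Finset.range t, spr m B F s ρ (sched m N B F s ρ i) := by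
  induction t with
  | zero => simp [sched]
  | succ t ih =>
    rw [Finset.prod_range_succ, ← ih, sched_succ, schedStep]
    split_ifs <;> rfl

lemma sched_n (m N : ℕ) (B F s ρ : ℝ) (t : ℕ) :
    (sched m N B F s ρ (t+1)).n = (sched m N B F s ρ t).n +
      (if (sched m N B F s ρ t).j < m then 1 else N) := by
  rw [sched_succ, schedStep]
  split_ifs <;> rfl

lemma le_sched_n (m N : ℕ) (hN : 1 ≤ N) (B F s ρ : ℝ) (t : ℕ) : t ≤ (sched m N B F s ρ t).n := by
  induction t with
  | zero => exact Nat.zero_le _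
  | succ t ih => rw [sched_n]; split_ifs <;> omega

lemma spX_ge {B F s : ℝ} (hB : 1 ≤ B) (h0 : 0 < s) (h1 : s ≤ 1) (hF : 0 ≤ F) (S : Sched) :
    1 ≤ spX B F s S := by
  apply Real.one_le_rpow hB
  have := cE_mono h0 h1 hF S.j
  exact mul_nonneg (Nat.cast_nonneg _) (by linarith)

lemma spL_ge {B F s : ℝ} (hB : 1 ≤ B) (h0 : 0 < s) (h1 : s ≤ 1) (hF : 0 ≤ F) (S : Sched) :
    2 ≤ spL B F s S := by
  have := spX_ge hB h0 h1 hF S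
  have : 0 < ⌈spX B F s S⌉₊ := Nat.ceil_pos.2 (by linarith)
  unfold spL; omega

lemma spX_le {B F s : ℝ} (S : Sched) : spX B F s S ≤ spL B F s S := by
  have := Nat.le_ceil (spX B F s S)
  unfold spL; push_cast; linarith

lemma spL_le {B F s : ℝ} (hB : 1 ≤ B) (h0 : 0 < s) (h1 : s ≤ 1) (hF : 0 ≤ F) (S : Sched) :
    (spL B F s S : ℝ) ≤ 3 * spX B F s S := by
  have h := spX_ge hB h0 h1 hF S
  have := (Nat.ceil_lt_add_one (show 0 ≤ spX B F s S by linarith)).le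
  unfold spL; push_cast; linarith

lemma spr_pos {m : ℕ} {B F s ρ : ℝ} (hB : 1 ≤ B) (h0 : 0 < s) (h1 : s ≤ 1) (hF : 0 ≤ F) (hρ : 0 < ρ)
    (S : Sched) : 0 < spr m B F s ρ S := by
  unfold spr
  split_ifs
  · have := spL_ge hB h0 h1 hF S
    have : (0:ℝ) < spL B F s S := by positivity
    positivity
  · exact hρ

lemma spr_le {m : ℕ} {B F s ρ : ℝ} (hB : 1 ≤ B) (h0 : 0 < s) (h1 : s ≤ 1) (hF : 0 ≤ F)
    (S : Sched) (hj : S.j < m) : spr m B F s ρ S ≤ 12 * spX B F s S ^ (2 * s - 1) := by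
  rw [spr, if_pos hj]
  have hX := spX_ge hB h0 h1 hF S
  have hL1 := spX_le (B := B) (F := F) (s := s) S
  have hL2 := spL_le hB h0 h1 hF S
  set X := spX B F s S
  set L : ℝ := (spL B F s S : ℝ)
  have hL : 0 < L := by linarith
  have hX0 : 0 < X := by linarith
  have e : (1 / L) * ((2 * L) ^ 2) ^ s = 4 ^ s * L ^ (2 * s - 1) := by
    rw [mul_pow, Real.mul_rpow (by positivity) (by positivity), ← Real.rpow_natCast L 2, ← Real.rpow_mul hL.le,
      Real.rpow_sub hL, Real.rpow_one]
    push_cast; norm_num; ring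
  rw [e]
  have h4 : (4:ℝ) ^ s ≤ 4 := by
    calc (4:ℝ) ^ s ≤ 4 ^ (1:ℝ) := Real.rpow_le_rpow_of_exponent_le (by norm_num) h1
      _ = 4 := Real.rpow_one _
  have h5 : L ^ (2 * s - 1) ≤ 3 * X ^ (2 * s - 1) := by
    rcases le_total 0 (2 * s - 1) with h | h
    · calc L ^ (2 * s - 1) ≤ (3 * X) ^ (2 * s - 1) := Real.rpow_le_rpow hL.le hL2 h
        _ = 3 ^ (2 * s - 1) * X ^ (2 * s - 1) := Real.mul_rpow (by norm_num) hX0.le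
        _ ≤ 3 * X ^ (2 * s - 1) := by
          have : (3:ℝ) ^ (2 * s - 1) ≤ 3 := by
            calc (3:ℝ) ^ (2 * s - 1) ≤ 3 ^ (1:ℝ) := Real.rpow_le_rpow_of_exponent_le (by norm_num) (by linarith)
              _ = 3 := Real.rpow_one _
          gcongr
    · calc L ^ (2 * s - 1) ≤ X ^ (2 * s - 1) := Real.rpow_le_rpow_of_nonpos hX0 hL1 h
        _ ≤ 3 * X ^ (2 * s - 1) := by
          have : 0 < X ^ (2 * s - 1) := by positivity
          linarith
  calc 4 ^ s * L ^ (2 * s - 1) ≤ 4 * (3 * X ^ (2 * s - 1)) := by gcongr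
    _ = _ := by ring

/-- the invariant -/
def schedInv (m : ℕ) (B F s : ℝ) (S : Sched) : Prop :=
  S.j ≤ m ∧ 0 < S.R ∧ S.R ≤ 12 ^ m ∧
    (S.j < m → S.n + 1 = S.o + S.j ∧
      S.R ≤ 12 ^ S.j * B ^ ((S.o:ℝ) * (-F + cE s F S.j * (2 * s - 1))))

lemma schedInv_step {m N : ℕ} {B F s ρ : ℝ} (hB : 1 ≤ B) (h0 : 0 < s) (h1 : s ≤ 1) (hF : 0 ≤ F)
    (hρ : 0 < ρ) (hρ1 : ρ < 1) (S : Sched) (h : schedInv m B F s S) :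
    schedInv m B F s (schedStep m N B F s ρ S) := by
  have hB0 : 0 < B := by linarith
  obtain ⟨hjm, hR, hRm, hj⟩ := h
  have hr := spr_pos (m := m) hB h0 h1 hF hρ S
  unfold schedStep
  by_cases hlt : S.j < m
  · rw [if_pos hlt]
    obtain ⟨hn, hRj⟩ := hj hlt
    have hbound : S.R * spr m B F s ρ S ≤
        12 ^ (S.j + 1) * B ^ ((S.o:ℝ) * (-F + cE s F (S.j + 1) * (2 * s - 1))) := by
      calc S.R * spr m B F s ρ S ≤ (12 ^ S.j * B ^ ((S.o:ℝ) * (-F + cE s F S.j * (2 * s - 1)))) *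
            (12 * spX B F s S ^ (2 * s - 1)) :=
            mul_le_mul hRj (spr_le hB h0 h1 hF S hlt) hr.le (by positivity)
        _ = 12 ^ (S.j + 1) * (B ^ ((S.o:ℝ) * (-F + cE s F S.j * (2 * s - 1))) * spX B F s S ^ (2 * s - 1)) := by ring
        _ = _ := by
          congr 1
          rw [spX, ← Real.rpow_mul hB0.le, ← Real.rpow_add hB0]
          congr 1; ring
    refine ⟨hlt, mul_pos hR hr, ?_, fun _ => ⟨by simp only; omega, hbound⟩⟩
    refine hbound.trans ?_
    have hb : B ^ ((S.o:ℝ) * (-F + cE s F (S.j + 1) * (2 * s - 1))) ≤ 1 := by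
      apply Real.rpow_le_one_of_one_le_of_nonpos hB
      have := cE_bd h0 h1 hF (S.j + 1)
      exact mul_nonpos_of_nonneg_of_nonpos (Nat.cast_nonneg _) (by linarith)
    calc _ ≤ (12:ℝ) ^ (S.j + 1) * 1 := by gcongr
      _ ≤ 12 ^ m := by rw [mul_one]; exact pow_le_pow_right₀ (by norm_num) hlt
  · rw [if_neg hlt]
    have hsp : spr m B F s ρ S = ρ := by rw [spr, if_neg hlt]
    have hRρ : S.R * ρ ≤ 12 ^ m := by nlinarith
    split_ifs with hc
    · refine ⟨Nat.zero_le _, mul_pos hR hr, by rw [hsp]; exact hRρ, fun _ => ⟨rfl, ?_⟩⟩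
      simp only [hsp, pow_zero, one_mul]
      have e : cE s F 0 = 0 := rfl
      rw [e, zero_mul, add_zero]
      have : (((S.n + N + 1 : ℕ) : ℝ) * -F) = -(F * ((S.n + N + 1 : ℕ) : ℝ)) := by ring
      rw [this, Real.rpow_neg hB0.le, ← one_div, le_div_iff₀ (by positivity)]
      exact hc
    · exact ⟨hjm, mul_pos hR hr, by rw [hsp]; exact hRρ, fun h => absurd h hlt⟩

lemma schedInv_all {m N : ℕ} {B F s ρ : ℝ} (hB : 1 ≤ B) (h0 : 0 < s) (h1 : s ≤ 1) (hF : 0 ≤ F)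
    (hρ : 0 < ρ) (hρ1 : ρ < 1) (t : ℕ) : schedInv m B F s (sched m N B F s ρ t) := by
  induction t with
  | zero =>
    exact ⟨le_refl m, one_pos, one_le_pow₀ (by norm_num), fun h => absurd h (lt_irrefl m)⟩
  | succ t ih => rw [sched_succ]; exact schedInv_step hB h0 h1 hF hρ hρ1 _ ih

lemma sched_RL {m : ℕ} {B F s : ℝ} (hB : 1 ≤ B) (h0 : 0 < s) (h1 : s ≤ 1) (hF : 0 ≤ F)
    (S : Sched) (h : schedInv m B F s S) (hj : S.j < m) :
    S.R * (spL B F s S : ℝ) ^ s ≤ 3 * 12 ^ m := by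
  have hB0 : 0 < B := by linarith
  obtain ⟨hn, hRj⟩ := h.2.2.2 hj
  have hX := spX_ge hB h0 h1 hF S
  have hX0 : 0 < spX B F s S := by linarith
  have hLs : (spL B F s S : ℝ) ^ s ≤ 3 * spX B F s S ^ s := by
    calc (spL B F s S : ℝ) ^ s ≤ (3 * spX B F s S) ^ s :=
          Real.rpow_le_rpow (Nat.cast_nonneg _) (spL_le hB h0 h1 hF S) h0.le
      _ = 3 ^ s * spX B F s S ^ s := Real.mul_rpow (by norm_num) hX0.le
      _ ≤ _ := by
        have : (3:ℝ) ^ s ≤ 3 := by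
          calc (3:ℝ) ^ s ≤ 3 ^ (1:ℝ) := Real.rpow_le_rpow_of_exponent_le (by norm_num) h1
            _ = 3 := Real.rpow_one _
        gcongr
  calc S.R * (spL B F s S : ℝ) ^ s ≤ (12 ^ S.j * B ^ ((S.o:ℝ) * (-F + cE s F S.j * (2 * s - 1)))) *
        (3 * spX B F s S ^ s) := mul_le_mul hRj hLs (by positivity) (by positivity)
    _ = 3 * 12 ^ S.j * (B ^ ((S.o:ℝ) * (-F + cE s F S.j * (2 * s - 1))) * spX B F s S ^ s) := by ring
    _ = 3 * 12 ^ S.j * 1 := by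
      congr 1
      rw [spX, ← Real.rpow_mul hB0.le, ← Real.rpow_add hB0]
      have := cE_rel (F := F) h0 S.j
      rw [show (S.o:ℝ) * (-F + cE s F S.j * (2 * s - 1)) + (S.o:ℝ) * (cE s F (S.j + 1) - cE s F S.j) * s
        = (S.o:ℝ) * (-F - ((1-s) * cE s F S.j - s * cE s F (S.j+1))) by ring, this]
      simp
    _ ≤ 3 * 12 ^ m := by
      rw [mul_one]
      have : (12:ℝ) ^ S.j ≤ 12 ^ m := pow_le_pow_right₀ (by norm_num) hj.le
      linarith

lemma sched_run {m N : ℕ} {B F s ρ : ℝ} (t : ℕ) (k : ℕ)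
    (hk : (sched m N B F s ρ t).j + k ≤ m) :
    (sched m N B F s ρ (t + k)).j = (sched m N B F s ρ t).j + k ∧
    (sched m N B F s ρ (t + k)).o = (sched m N B F s ρ t).o ∧
    (sched m N B F s ρ (t + k)).n = (sched m N B F s ρ t).n + k := by
  induction k with
  | zero => simp
  | succ k ih =>
    obtain ⟨h1, h2, h3⟩ := ih (by omega)
    rw [← add_assoc, sched_succ, schedStep, if_pos (by omega)]
    refine ⟨by simp only; omega, by simp only; omega, by simp only; omega⟩

lemma sched_zero {m N : ℕ} {B F s ρ : ℝ} (hB : 1 ≤ B) (h0 : 0 < s) (h1 : s ≤ 1) (hF : 0 ≤ F)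
    (hρ : 0 < ρ) (hρ1 : ρ < 1) (hρN : ρ * B ^ (F * (N:ℝ)) < 1) (hm : 1 ≤ m) (t : ℕ) :
    ∃ t' ≥ t, (sched m N B F s ρ t').j = 0 := by
  have hB0 : 0 < B := by linarith
  by_contra! hcon
  have hI := fun t => schedInv_all (m := m) (N := N) hB h0 h1 hF hρ hρ1 t
  obtain ⟨t1, ht1, hj1⟩ : ∃ t1 ≥ t, (sched m N B F s ρ t1).j = m := by
    have hle := (hI t).1
    refine ⟨t + (m - (sched m N B F s ρ t).j), by omega, ?_⟩
    rw [(sched_run t (m - (sched m N B F s ρ t).j) (by omega)).1]; omega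
  set φ : Sched → ℝ := fun S => S.R * B ^ (F * (S.n + 1 : ℕ)) with hφ
  have hstep : ∀ k, (sched m N B F s ρ (t1 + k)).j = m ∧
      φ (sched m N B F s ρ (t1 + k)) = φ (sched m N B F s ρ t1) * (ρ * B ^ (F * (N:ℝ))) ^ k ∧
      (1 ≤ k → 1 < φ (sched m N B F s ρ (t1 + k))) := by
    intro k
    induction k with
    | zero => exact ⟨hj1, by simp, fun h => by omega⟩
    | succ k ih =>
      obtain ⟨a1, a2, _⟩ := ih
      have hc := hcon (t1 + (k+1)) (by omega)
      have hsp : spr m B F s ρ (sched m N B F s ρ (t1 + k)) = ρ := by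
        rw [spr, if_neg (by omega)]
      rw [← add_assoc, sched_succ, schedStep, if_neg (by omega)] at hc ⊢
      split_ifs at hc ⊢ with h
      · exact absurd rfl hc
      · push Not at h
        refine ⟨a1, ?_, fun _ => ?_⟩
        · rw [pow_succ, ← mul_assoc, ← a2]
          simp only [hφ, hsp]
          rw [show F * (((sched m N B F s ρ (t1 + k)).n + N + 1 : ℕ) : ℝ) =
            F * (((sched m N B F s ρ (t1 + k)).n + 1 : ℕ) : ℝ) + F * (N:ℝ) by push_cast; ring,
            Real.rpow_add hB0]
          ring
        · simp only [hφ, hsp]; exact h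
  have hlim : Tendsto (fun k : ℕ => φ (sched m N B F s ρ t1) * (ρ * B ^ (F * (N:ℝ))) ^ k) atTop (nhds 0) := by
    have := (tendsto_pow_atTop_nhds_zero_of_lt_one (by positivity) hρN).const_mul (φ (sched m N B F s ρ t1))
    simpa using this
  obtain ⟨k, hk, hk1⟩ := ((hlim.eventually_lt_const one_pos).and (eventually_ge_atTop 1)).exists
  obtain ⟨_, b2, b3⟩ := hstep k
  have := b3 hk1
  rw [b2] at this
  linarith


theorem lower_aux {m : ℕ} {B s : ℝ} (hm : 1 ≤ m) (hB : 1 ≤ B) (h0 : 0 < s) (h1 : s ≤ 1)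
    (hp : ¬ pressOK B (fIter s (m - 1)) s) : ENNReal.ofReal s ≤ dimH (ESet m B) := by
  classical
  have hB0 : 0 < B := by linarith
  have hF0 : 0 < fIter s (m-1) := fIter_pos h0 h1 _
  have hcm : cE s (fIter s (m - 1)) m = 1 := cE_m h0 h1 hm
  generalize hFdef : fIter s (m-1) = F at *
  have hF := hF0.le
  obtain ⟨n, A, ρ, hρ0, hρ1, hρB, hA⟩ := alphabet hB hF h0 hp
  obtain ⟨c, hc0, hc⟩ := bw_sep A
  have hq : ∀ w : Fin n → ℕ+, (1:ℝ) ≤ contQ n (fun i => (w i : ℕ)) := fun w => by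
    exact_mod_cast contQ_pos n _ fun i => (w i).2
  set p : (Fin n → ℕ+) → ℝ := fun w => ρ * (18 * (contQ n (fun i => (w i : ℕ)) : ℝ)) ^ (-(2 * s)) with hpdef
  have hp0 : ∀ w, 0 < p w := fun w => by have := hq w; positivity
  have hpρ : ∀ w, p w ≤ ρ := fun w => by
    have h2 : (18 * (contQ n (fun i => (w i : ℕ)) : ℝ)) ^ (-(2 * s)) ≤ 1 :=
      Real.rpow_le_one_of_one_le_of_nonpos (by linarith [hq w]) (by linarith)
    calc p w ≤ ρ * 1 := by simp only [hpdef]; gcongr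
      _ = ρ := mul_one _
  have hpQ : ∀ w, p w * ((18 * (contQ n (fun i => (w i : ℕ)) : ℝ)) ^ 2) ^ s = ρ := fun w => by
    have h2 := hq w
    have h3 : (0:ℝ) < 18 * (contQ n (fun i => (w i : ℕ)) : ℝ) := by linarith
    simp only [hpdef]
    rw [← Real.rpow_natCast _ 2, ← Real.rpow_mul h3.le, mul_assoc, ← Real.rpow_add h3]
    push_cast
    rw [neg_add_cancel, Real.rpow_zero, mul_one]
  obtain ⟨D, G, hD, hG⟩ := partition_exists p A (fun w _ => hp0 w)
  have hDin : ∀ y ∈ Ico (0:ℝ) 1, D y ∈ A ∧ G y ∈ Ico (0:ℝ) 1 := fun y hy =>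
    hD y hy.1 (lt_of_lt_of_le hy.2 hA)
  set N := n + 2 with hN
  set St : ℕ → Sched := sched m N B F s ρ with hSt
  have hI : ∀ t, schedInv m B F s (St t) := fun t => schedInv_all hB h0 h1 hF hρ0 hρ1 t
  set L : ℕ → ℕ := fun t => spL B F s (St t) with hLdef
  have hL2 : ∀ t, 2 ≤ L t := fun t => spL_ge hB h0 h1 hF _
  set W : ℕ → ℝ → List ℕ := fun t y =>
    if (St t).j < m then [L t + ⌊(L t : ℝ) * y⌋₊] else bw (D y) with hWdef
  set GG : ℕ → ℝ → ℝ := fun t y => if (St t).j < m then Int.fract ((L t : ℝ) * y) else G y with hGG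
  have hWpos : ∀ t y, ∀ a ∈ W t y, 1 ≤ a := by
    intro t y a ha
    simp only [hWdef] at ha
    split_ifs at ha with hj
    · rw [List.mem_singleton] at ha
      have := hL2 t
      omega
    · exact bw_pos _ a ha
  have hWlen : ∀ t y, (W t y).length = if (St t).j < m then 1 else N := by
    intro t y
    simp only [hWdef]
    split_ifs with hj
    · rfl
    · exact bw_length _
  refine coding h0 h1 (ESet m B) W GG (fun t => spr m B F s ρ (St t)) (max ρ (1/2))
    (max (12 ^ m * c ^ (-s)) (16 * (3 * 12 ^ m))) (fun t => spr_pos hB h0 h1 hF hρ0 _)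
    (by positivity) (max_lt hρ1 (by norm_num)) (by positivity) ?_ ?_ ?_ ?_ ?_
  · intro t y hy
    simp only [hGG]
    split_ifs with hj
    · exact ⟨Int.fract_nonneg _, Int.fract_lt_one _⟩
    · exact (hDin y hy).2
  · intro t y hy
    refine ⟨?_, hWpos t y, ?_⟩
    · intro h
      have := hWlen t y
      rw [h] at this
      split_ifs at this <;> simp at this <;> omega
    · intro z hz
      simp only [hWdef]
      split_ifs with hj
      · rw [cfw_cons, cfw_nil]
        have : (2:ℝ) ≤ ((L t + ⌊(L t : ℝ) * y⌋₊ : ℕ) : ℝ) := by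
          have := hL2 t
          exact_mod_cast (by omega : 2 ≤ L t + ⌊(L t : ℝ) * y⌋₊)
        apply one_div_le_one_div_of_le (by norm_num)
        linarith [hz.1]
      · exact bw_le_half _ hz
  · intro t y hy y' hy' hww
    by_cases hj : (St t).j < m
    · simp only [hWdef, hGG, hj, if_true] at hww ⊢
      have hL := hL2 t
      have hLr : (2:ℝ) ≤ L t := by exact_mod_cast hL
      have hfl : ⌊(L t : ℝ) * y⌋₊ = ⌊(L t : ℝ) * y'⌋₊ := by
        have := List.head_eq_of_cons_eq hww
        omega
      refine ⟨1 / (L t : ℝ), (2 * (L t : ℝ)) ^ 2, by positivity, ?_, by positivity, ?_, sp_same hL hy hy' hfl, ?_⟩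
      · apply le_max_of_le_right
        exact one_div_le_one_div_of_le (by norm_num) hLr
      · rw [spr, if_pos hj]
      · intro z hz z' hz'
        rw [← hfl]
        have := sp_floor_lt hL hy
        exact sp_z (by omega) (by omega) hz hz'
    · simp only [hWdef, hGG, hj, if_false] at hww ⊢
      have hz0 : (1/2 : ℝ) ∈ Ioo (0:ℝ) 1 := by constructor <;> norm_num
      have hDD : D y = D y' := by
        by_contra hne
        have := hc _ (hDin y hy).1 _ (hDin y' hy').1 hne _ hz0 _ hz0
        rw [hww, sub_self, abs_zero] at this
        linarith
      have hqy := hq (D y)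
      refine ⟨p (D y), (18 * (contQ n (fun i => (D y i : ℕ)) : ℝ)) ^ 2, hp0 _, le_max_of_le_left (hpρ _),
        by positivity, ?_, hG y y' hy.1 (hy.2.trans_le hA) hy'.1 (hy'.2.trans_le hA) hDD, ?_⟩
      · rw [hpQ, spr, if_neg hj]
      · intro z hz z' hz'
        rw [← hDD]
        exact bw_same _ hz hz'
  · intro t y hy y' hy' hww z hz z' hz'
    rw [hSt, ← sched_R, ← hSt]
    have hR := (hI t).2.1
    have hR2 := (hI t).2.2.1
    by_cases hj : (St t).j < m
    · simp only [hWdef, hj, if_true] at hww ⊢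
      have hfl : ⌊(L t : ℝ) * y⌋₊ ≠ ⌊(L t : ℝ) * y'⌋₊ := by
        intro h; apply hww; rw [h]
      refine (sp_diff (hL2 t) h0 h1 hR.le (sched_RL hB h0 h1 hF _ (hI t) hj) hy hy' hfl hz hz').trans ?_
      gcongr
      exact le_max_right _ _
    · simp only [hWdef, hj, if_false] at hww ⊢
      have hDD : D y ≠ D y' := by
        intro h; apply hww; rw [h]
      have hcc := hc _ (hDin y hy).1 _ (hDin y' hy').1 hDD z ⟨hz.1, by linarith [hz.2]⟩ z' ⟨hz'.1, by linarith [hz'.2]⟩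
      set V := |cfw (bw (D y)) z - cfw (bw (D y')) z'|
      have hY1 : |y - y'| ≤ 1 := by
        rw [abs_le]; constructor <;> linarith [hy.1, hy.2, hy'.1, hy'.2]
      have hV : c ^ s ≤ V ^ s := Real.rpow_le_rpow hc0.le hcc h0.le
      calc (St t).R * |y - y'| ≤ 12 ^ m * 1 := mul_le_mul hR2 hY1 (abs_nonneg _) (by positivity)
        _ = 12 ^ m * c ^ (-s) * c ^ s := by
          rw [mul_assoc, ← Real.rpow_add hc0, neg_add_cancel, Real.rpow_zero]
        _ ≤ 12 ^ m * c ^ (-s) * V ^ s := by gcongr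
        _ ≤ _ := by
          gcongr
          exact le_max_left _ _
  · intro y z hy hy1 hz hz1
    have hiter : ∀ t, gaussMap^[(St t).n] (z 0) = z t := by
      intro t
      induction t with
      | zero => rfl
      | succ t ih =>
        have e : (St (t+1)).n = (W t (y t)).length + (St t).n := by
          rw [hWlen, hSt, sched_n]; exact add_comm _ _
        rw [e, Function.iterate_add_apply, ih, hz1 t, gauss_iter_cfw (hWpos t _) (hz (t+1))]
    have hnt : ∀ t, t ≤ (St t).n := fun t => le_sched_n m N (by omega) B F s ρ t
    refine ⟨hz 0, irr_of_iter (hz 0) fun k => ⟨(St k).n, hnt k, ?_⟩, ?_⟩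
    · rw [hiter]; exact (hz k).1.ne'
    · apply Set.infinite_of_forall_exists_gt
      intro k
      obtain ⟨t, ht, hj0⟩ := sched_zero (N := N) hB h0 h1 hF hρ0 hρ1 hρB hm k
      have hno := ((hI t).2.2.2 (by change (sched m N B F s ρ t).j < m; omega)).1
      have hj0' : (St t).j = 0 := hj0
      refine ⟨(St t).o, ?_, by have := hnt t; omega⟩
      change B ^ (St t).o ≤ _
      have hdig : ∀ i ∈ Finset.range m, B ^ (((St t).o : ℝ) * (cE s F (i+1) - cE s F i)) ≤
          (pq (z 0) ((St t).o + i) : ℝ) := by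
        intro i hi
        rw [Finset.mem_range] at hi
        obtain ⟨r1, r2, r3⟩ := sched_run (m := m) (N := N) (B := B) (F := F) (s := s) (ρ := ρ) t i (by omega)
        change (St (t+i)).j = (St t).j + i at r1
        change (St (t+i)).o = (St t).o at r2
        change (St (t+i)).n = (St t).n + i at r3
        have hji : (St (t+i)).j = i := by omega
        have e : (St t).o + i = (St (t+i)).n + 1 := by omega
        have e2 : pq (z 0) ((St t).o + i) = pq (z (t+i)) (0 + 1) := by
          rw [e, pq_succ, pq_succ, hiter]; rfl
        have hl : 0 < (W (t+i) (y (t+i))).length := by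
          rw [hWlen]; split_ifs <;> omega
        have e3 : pq (z (t+i)) (0 + 1) = (W (t+i) (y (t+i)))[0] := by
          conv_lhs => rw [hz1 (t+i)]
          exact pq_cfw (hWpos _ _) (hz _) 0 hl
        have e4 : (W (t+i) (y (t+i)))[0] = L (t+i) + ⌊(L (t+i) : ℝ) * y (t+i)⌋₊ := by
          simp [hWdef, hji, hi]
        have hX := spX_le (B := B) (F := F) (s := s) (St (t+i))
        rw [spX, hji, r2] at hX
        refine hX.trans ?_
        rw [e2, e3, e4]
        push_cast
        have : (0:ℝ) ≤ (⌊(L (t+i) : ℝ) * y (t+i)⌋₊ : ℝ) := Nat.cast_nonneg _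
        change (L (t+i) : ℝ) ≤ _
        linarith
      refine le_trans ?_ (Finset.prod_le_prod (fun i _ => by positivity) hdig)
      rw [← Real.rpow_sum_of_pos hB0, ← Finset.mul_sum, Finset.sum_range_sub, hcm]
      have : cE s F 0 = 0 := rfl
      rw [this, sub_zero, mul_one, Real.rpow_natCast]

theorem lower_bound {m : ℕ} {B : ℝ} (hm : 1 ≤ m) (hB : 1 ≤ B) :
    ENNReal.ofReal (tExpM B m) ≤ dimH (ESet m B) := by
  have hset : tExpM B m = sInf {s | 0 ≤ s ∧ s ≤ 1 ∧ pressOK B (fIter s (m-1)) s} := rfl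
  apply le_of_forall_lt
  intro a ha
  obtain ⟨b, hab, hb⟩ := exists_between ha
  have hbt : b ≠ ⊤ := ne_top_of_lt hb
  have hb0 : 0 < b.toReal := ENNReal.toReal_pos (ne_of_gt (lt_of_le_of_lt (zero_le) hab)) hbt
  have hbt2 : b.toReal < tExpM B m := by
    rw [← ENNReal.ofReal_toReal hbt] at hb
    exact (ENNReal.ofReal_lt_ofReal_iff_of_nonneg hb0.le).1 hb
  have hbdd : BddBelow {s | 0 ≤ s ∧ s ≤ 1 ∧ pressOK B (fIter s (m-1)) s} := ⟨0, fun s hs => hs.1⟩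
  have hs1 : b.toReal ≤ 1 := by
    by_contra! h
    rw [hset] at hbt2
    have hemp : {s | 0 ≤ s ∧ s ≤ 1 ∧ pressOK B (fIter s (m-1)) s} = ∅ ∨
      ({s | 0 ≤ s ∧ s ≤ 1 ∧ pressOK B (fIter s (m-1)) s}).Nonempty := Set.eq_empty_or_nonempty _
    rcases hemp with he | ⟨s, hs⟩
    · rw [he, Real.sInf_empty] at hbt2; linarith
    · have := csInf_le hbdd hs
      linarith [hs.2.1]
  have hnp : ¬ pressOK B (fIter b.toReal (m-1)) b.toReal := by
    intro h
    have := csInf_le hbdd (show b.toReal ∈ _ from ⟨hb0.le, hs1, h⟩)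
    rw [hset] at hbt2
    linarith
  have := lower_aux hm hB hb0 hs1 hnp
  rw [ENNReal.ofReal_toReal hbt] at this
  exact hab.trans_le this

theorem huang_wu_xu (m : ℕ) (hm : 1 ≤ m) (B : ℝ) (hB : 1 ≤ B) :
    dimH {x : ℝ | x ∈ Set.Ioo (0 : ℝ) 1 ∧ Irrational x ∧
      {n : ℕ | B ^ n ≤ ∏ i ∈ Finset.range m, (pq x (n + i) : ℝ)}.Infinite} =
    ENNReal.ofReal (tExpM B m) := by
  exact le_antisymm (upper_bound hm hB) (lower_bound hm hB)
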